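/- arXiv:1302.6904 — 3 statements merged into one kernel-verified Lean document; each statement's English description precedes it below -/
import Mathlib

section
/- Let p be an odd prime, q a power of p, and let P be a Sylow p-subgroup of the symplectic group Sp_10(F_q). Then the number of conjugacy classes of P equals 2v⁸ + 24v⁷ + 132v⁶ + 395v⁵ + 630v⁴ + 500v³ + 180v² + 25v + 1, where v = q − 1. -/
/-!
Let `U` be a maximal unipotent subgroup of the symplectic group of rank `n` over a field with `q`
elements, with `q` odd. By Burnside's lemma, `k(U) |U|` is the number of commuting pairs in `U`. The
Cayley transform `X ↦ (1 - X) (1 + X)⁻¹` is a bijection between `U` and its Lie algebra `𝔲` which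
preserves commutation, so that `|U| = q ^ n²` and the commuting pairs may be counted in `𝔲`. The
kernels of an endomorphism and of its transpose have the same size, so for each `Y ∈ 𝔲` the
centraliser of `Y` may be replaced by the space of linear forms on `𝔲` which vanish on `[Y, 𝔲]`.
Writing `Y` as a pair of a strictly upper triangular matrix `A` and a symmetric matrix `S`, and a
linear form likewise as `(B, T)`, this condition says that `T A + (T A)ᵀ = 0` and that the strictly
lower triangular part of `Bᵀ A - A Bᵀ - S T` vanishes.

For `n = 5` these are `25` equations in `50` unknowns. Their solutions are counted by a branching
algorithm: an equation, or a coefficient of one, which is linear in some unknown `x` with an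
invertible coefficient `m`, say `m x - s`, is used to split the solutions according to whether
`m x = s`, and `x` is eliminated by the substitution of `s / m` or `(x' + s) / m` with `x' ≠ 0`.

That `U` is a Sylow subgroup follows from the normaliser condition in nilpotent groups: a
`p`-element normalising `U` preserves the flag which defines `U`, so that it is upper triangular,
and its diagonal entries are `p`-power roots of unity in characteristic `p`, hence equal to `1`.
-/

namespace SymplecticUnipotent

/-! ### Polynomials as lists of terms -/

/-- An integer polynomial, as a list of pairs `(coefficient, monomial)`. Variables are prime numbers
and a monomial is the product of its variables, so that monomials are multiplied and divided as
natural numbers. -/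
abbrev Poly := List (ℤ × ℕ)

section Evaluation

variable {R : Type*} [CommRing R]

/-- The value of a monomial at the point `ρ`, with value `0` at the junk monomial `0`. -/
def evalMonomial (ρ : ℕ → R) : ℕ →*₀ R where
  toFun m := if m = 0 then 0 else (m.primeFactorsList.map ρ).prod
  map_zero' := if_pos rfl
  map_one' := by simp
  map_mul' a b := by
    rcases eq_or_ne a 0 with rfl | ha
    · simp
    rcases eq_or_ne b 0 with rfl | hb
    · simp
    rw [if_neg ha, if_neg hb, if_neg (mul_ne_zero ha hb),
      ((Nat.perm_primeFactorsList_mul ha hb).map ρ).prod_eq, List.map_append, List.prod_append]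

/-- The value of a polynomial at the point `ρ`. -/
def eval (ρ : ℕ → R) (p : Poly) : R := (p.map fun t => (t.1 : R) * evalMonomial ρ t.2).sum

variable (ρ : ℕ → R)

lemma evalMonomial_apply {m : ℕ} (hm : m ≠ 0) :
    evalMonomial ρ m = (m.primeFactorsList.map ρ).prod := if_neg hm

lemma evalMonomial_prime {x : ℕ} (hx : x.Prime) : evalMonomial ρ x = ρ x := by
  simp [evalMonomial_apply ρ hx.ne_zero, Nat.primeFactorsList_prime hx]

lemma evalMonomial_update {x m : ℕ} (hm : ¬ x ∣ m) (a : R) :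
    evalMonomial (Function.update ρ x a) m = evalMonomial ρ m := by
  have hm0 : m ≠ 0 := by rintro rfl; exact hm (dvd_zero x)
  rw [evalMonomial_apply _ hm0, evalMonomial_apply _ hm0]
  refine congrArg List.prod (List.map_congr_left fun y hy => Function.update_of_ne ?_ a ρ)
  rintro rfl
  exact hm (Nat.dvd_of_mem_primeFactorsList hy)

lemma evalMonomial_ne_zero [IsDomain R] {m : ℕ} (hm : m ≠ 0)
    (h : ∀ x, x.Prime → x ∣ m → ρ x ≠ 0) : evalMonomial ρ m ≠ 0 := by
  rw [evalMonomial_apply ρ hm]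
  refine List.prod_ne_zero fun hmem => ?_
  obtain ⟨x, hx, hx0⟩ := List.mem_map.1 hmem
  exact h x (Nat.prime_of_mem_primeFactorsList hx) (Nat.dvd_of_mem_primeFactorsList hx) hx0

@[simp] lemma eval_nil : eval ρ [] = 0 := rfl

@[simp] lemma eval_cons (t : ℤ × ℕ) (p : Poly) :
    eval ρ (t :: p) = t.1 * evalMonomial ρ t.2 + eval ρ p := by
  simp [eval]

lemma eval_update {x : ℕ} {p : Poly} (hp : ∀ t ∈ p, ¬ x ∣ t.2) (a : R) :
    eval (Function.update ρ x a) p = eval ρ p :=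
  congrArg List.sum (List.map_congr_left fun t ht => by rw [evalMonomial_update ρ (hp t ht)])

/-- `c * m + p`, merging equal monomials. -/
def addTerm (c : ℤ) (m : ℕ) : Poly → Poly
  | [] => [(c, m)]
  | t :: p =>
    bif m.beq t.2 then bif (c + t.1).natAbs.beq 0 then p else (c + t.1, m) :: p
    else t :: addTerm c m p

/-- The sum of two polynomials. -/
def add (p q : Poly) : Poly := p.foldr (fun t r => addTerm t.1 t.2 r) q

/-- The product of a polynomial and the term `c * m`. -/
def mulTerm (c : ℤ) (m : ℕ) (p : Poly) : Poly := p.map fun t => (c * t.1, m * t.2)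

/-- The product of two polynomials. -/
def mul (p q : Poly) : Poly := p.foldr (fun t r => add (mulTerm t.1 t.2 q) r) []

/-- The part of `p` without the variable `x`. -/
def constCoeff (x : ℕ) (p : Poly) : Poly := p.filter fun t => !(t.2 % x).beq 0

/-- The quotient of `p` by the variable `x`. -/
def divVar (x : ℕ) (p : Poly) : Poly :=
  p.filterMap fun t => bif (t.2 % x).beq 0 then some (t.1, t.2 / x) else none

lemma beq_eq_decide (a b : ℕ) : a.beq b = decide (a = b) := by
  rw [Bool.eq_iff_iff, Nat.beq_eq, decide_eq_true_iff]

lemma eval_addTerm (c : ℤ) (m : ℕ) (p : Poly) :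
    eval ρ (addTerm c m p) = c * evalMonomial ρ m + eval ρ p := by
  induction p with
  | nil => simp [addTerm]
  | cons t p ih =>
    obtain ⟨d, n⟩ := t
    rcases eq_or_ne m n with rfl | hmn
    · have hsum : (c : R) * evalMonomial ρ m + (d * evalMonomial ρ m + eval ρ p) =
          (c + d : ℤ) * evalMonomial ρ m + eval ρ p := by push_cast; ring
      rw [eval_cons, hsum]
      rcases eq_or_ne (c + d) 0 with hcd | hcd <;> simp [addTerm, beq_eq_decide, hcd]
    · simp [addTerm, beq_eq_decide, hmn, ih, add_left_comm]

lemma eval_add (p q : Poly) : eval ρ (add p q) = eval ρ p + eval ρ q := by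
  induction p with
  | nil => simp [add]
  | cons t p ih =>
    change eval ρ (addTerm t.1 t.2 (add p q)) = _
    rw [eval_addTerm, ih, eval_cons, add_assoc]

lemma eval_mulTerm (c : ℤ) (m : ℕ) (p : Poly) :
    eval ρ (mulTerm c m p) = c * evalMonomial ρ m * eval ρ p := by
  induction p with
  | nil => simp [mulTerm]
  | cons t p ih =>
    change eval ρ (_ :: mulTerm c m p) = _
    simp only [eval_cons, ih, map_mul, Int.cast_mul]
    ring

lemma eval_mul (p q : Poly) : eval ρ (mul p q) = eval ρ p * eval ρ q := by
  induction p with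
  | nil => simp [mul]
  | cons t p ih =>
    change eval ρ (add _ (mul p q)) = _
    rw [eval_add, eval_mulTerm, ih, eval_cons, add_mul]

lemma not_dvd_of_mem_constCoeff {x : ℕ} {p : Poly} {t : ℤ × ℕ} (ht : t ∈ constCoeff x p) :
    ¬ x ∣ t.2 := by
  rw [Nat.dvd_iff_mod_eq_zero]
  simpa [beq_eq_decide] using (List.mem_filter.1 ht).2

lemma not_dvd_of_divVar_eq_nil {x : ℕ} {p : Poly} (h : divVar x p = []) {t : ℤ × ℕ} (ht : t ∈ p) :
    ¬ x ∣ t.2 := by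
  intro hx
  simpa [Nat.mod_eq_zero_of_dvd hx] using List.filterMap_eq_nil_iff.1 h t ht

lemma eval_eq_constCoeff_add_divVar {x : ℕ} (hx : x.Prime) (p : Poly) :
    eval ρ p = eval ρ (constCoeff x p) + ρ x * eval ρ (divVar x p) := by
  induction p with
  | nil => simp [constCoeff, divVar]
  | cons t p ih =>
    by_cases hdvd : x ∣ t.2
    · have hc : constCoeff x (t :: p) = constCoeff x p := by
        simp [constCoeff, Nat.mod_eq_zero_of_dvd hdvd]
      have hd : divVar x (t :: p) = (t.1, t.2 / x) :: divVar x p := by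
        simp [divVar, Nat.mod_eq_zero_of_dvd hdvd]
      have hm : evalMonomial ρ t.2 = ρ x * evalMonomial ρ (t.2 / x) := by
        rw [← evalMonomial_prime ρ hx, ← map_mul, Nat.mul_div_cancel' hdvd]
      rw [hc, hd, eval_cons, eval_cons, hm, ih]
      ring
    · have hmod : (t.2 % x).beq 0 = false := by
        simpa [beq_eq_decide] using fun h => hdvd (Nat.dvd_of_mod_eq_zero h)
      have hc : constCoeff x (t :: p) = t :: constCoeff x p := by simp [constCoeff, hmod]
      have hd : divVar x (t :: p) = divVar x p := by simp [divVar, hmod]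
      rw [hc, hd, eval_cons, eval_cons, ih, add_assoc]

/-- The polynomial `m ^ e * p(x := s / m)` for a suitable `e`, together with `e`, by Horner's
scheme; the first number is a bound for the recursion depth. -/
def horner (x m : ℕ) (s : Poly) : ℕ → Poly → Poly × ℕ
  | 0, p => (p, 0)
  | d + 1, p =>
    match divVar x p with
    | [] => (p, 0)
    | t :: q =>
      let (r, e) := horner x m s d (t :: q)
      (add (mulTerm 1 (m ^ (e + 1)) (constCoeff x p)) (mul s r), e + 1)

/-- The result of substituting `s / m` for `x` in `p` and clearing denominators. The recursion
depth is bounded by the largest monomial, since dividing by `x` decreases a monomial. -/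
def subst (x m : ℕ) (s p : Poly) : Poly :=
  (horner x m s (p.foldr (fun t d => max t.2 d) 0) p).1

variable {ρ}

lemma eval_eq_zero_of_monomials_eq_zero {p : Poly} (hp : ∀ t ∈ p, t.2 = 0) : eval ρ p = 0 := by
  refine List.sum_eq_zero fun y hy => ?_
  obtain ⟨t, ht, rfl⟩ := List.mem_map.1 hy
  rw [hp t ht, map_zero, mul_zero]

lemma le_of_mem_divVar {x d : ℕ} (hx : x.Prime) {p : Poly} (hp : ∀ t ∈ p, t.2 ≤ d + 1)
    {t : ℤ × ℕ} (ht : t ∈ divVar x p) : t.2 ≤ d := by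
  obtain ⟨u, hu, hut⟩ := List.mem_filterMap.1 ht
  have hle := hp u hu
  have hdiv : u.2 / x ≤ u.2 / 2 := Nat.div_le_div_left hx.two_le two_pos
  by_cases hmod : (u.2 % x).beq 0 = true <;> simp only [hmod, cond_true, cond_false,
    Option.some.injEq, reduceCtorEq] at hut
  subst hut
  dsimp only
  omega

lemma eval_horner {x m : ℕ} (hx : x.Prime) {s : Poly} {a : R}
    (ha : evalMonomial ρ m * a = eval ρ s) (d : ℕ) (p : Poly) (hp : ∀ t ∈ p, t.2 ≤ d) :
    eval ρ (horner x m s d p).1 =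
      evalMonomial ρ m ^ (horner x m s d p).2 * eval (Function.update ρ x a) p := by
  induction d generalizing p with
  | zero =>
    have hp' : ∀ t ∈ p, t.2 = 0 := fun t ht => Nat.le_zero.1 (hp t ht)
    simp [horner, eval_eq_zero_of_monomials_eq_zero hp']
  | succ d ih =>
    rw [horner]
    split
    case h_1 hdiv => simp [eval_update ρ fun _ => not_dvd_of_divVar_eq_nil hdiv]
    case h_2 t q hdiv =>
      have hrec := ih (t :: q) fun u hu => le_of_mem_divVar hx hp (hdiv ▸ hu)
      have hconst : eval (Function.update ρ x a) (constCoeff x p) = eval ρ (constCoeff x p) :=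
        eval_update ρ (fun _ => not_dvd_of_mem_constCoeff) a
      rw [eval_eq_constCoeff_add_divVar (Function.update ρ x a) hx p, hdiv,
        Function.update_self, hconst, eval_add, eval_mulTerm, eval_mul, hrec, ← ha, map_pow]
      push_cast
      ring

lemma exists_eval_subst {x m : ℕ} (hx : x.Prime) {s : Poly} {a : R}
    (ha : evalMonomial ρ m * a = eval ρ s) (p : Poly) :
    ∃ e : ℕ, eval ρ (subst x m s p) = evalMonomial ρ m ^ e * eval (Function.update ρ x a) p := by
  refine ⟨_, eval_horner hx ha _ p ?_⟩
  induction p with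
  | nil => simp
  | cons t p ih =>
    simp only [List.forall_mem_cons, List.foldr_cons]
    exact ⟨le_max_left _ _, fun u hu => (ih u hu).trans (le_max_right _ _)⟩

lemma eval_subst_eq_zero_iff [IsDomain R] {x m : ℕ} (hx : x.Prime) {s : Poly} {a : R}
    (ha : evalMonomial ρ m * a = eval ρ s) (hm : evalMonomial ρ m ≠ 0) (p : Poly) :
    eval ρ (subst x m s p) = 0 ↔ eval (Function.update ρ x a) p = 0 := by
  obtain ⟨e, he⟩ := exists_eval_subst hx ha p
  rw [he, mul_eq_zero, or_iff_right (pow_ne_zero e hm)]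

end Evaluation

/-! ### Solution sets -/

section Solutions

variable (F : Type*) [Field F] [Fintype F]

open scoped Classical in
/-- The common zeros of the polynomials in `E` at which the variables in `U` are nonzero, the
variables in `V \ U` are arbitrary, and all other variables vanish. -/
noncomputable def solutions (U V : Finset ℕ) (E : List Poly) : Finset (ℕ →₀ F) :=
  ((U ∪ V).finsupp fun x => if x ∈ U then {0}ᶜ else Finset.univ).filter
    fun ρ => ∀ p ∈ E, eval ρ p = 0

variable {F} {U V : Finset ℕ} {E : List Poly} {x m : ℕ} {s : Poly}

lemma mem_solutions {ρ : ℕ →₀ F} :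
    ρ ∈ solutions F U V E ↔
      (∀ x ∈ U, ρ x ≠ 0) ∧ (∀ x, x ∉ U → x ∉ V → ρ x = 0) ∧ ∀ p ∈ E, eval ρ p = 0 := by
  classical
  have hsupp : ρ.support ⊆ U ∪ V ↔ ∀ x, x ∉ U → x ∉ V → ρ x = 0 := by
    simp only [Finset.subset_iff, Finset.mem_union, Finsupp.mem_support_iff]
    grind
  have hunit : (∀ x ∈ U ∪ V, ρ x ∈ if x ∈ U then ({0}ᶜ : Finset F) else Finset.univ) ↔
      ∀ x ∈ U, ρ x ≠ 0 := by
    refine ⟨fun h x hx => ?_, fun h x _ => ?_⟩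
    · simpa [hx] using h x (Finset.mem_union_left V hx)
    · by_cases hx : x ∈ U <;> simp [hx, h]
  rw [solutions, Finset.mem_filter, Finset.mem_finsupp_iff, hsupp, hunit]
  tauto

lemma solutions_congr {E E' : List Poly}
    (h : ∀ ρ : ℕ →₀ F, (∀ x ∈ U, ρ x ≠ 0) → (∀ x, x ∉ U → x ∉ V → ρ x = 0) →
      ((∀ p ∈ E, eval ρ p = 0) ↔ ∀ p ∈ E', eval ρ p = 0)) :
    solutions F U V E = solutions F U V E' := by
  ext ρ
  simp only [mem_solutions]
  exact and_congr_right fun hU => and_congr_right fun hV => h ρ hU hV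

lemma card_solutions_nil (hUV : Disjoint U V) :
    (solutions F U V []).card = (Fintype.card F - 1) ^ U.card * Fintype.card F ^ V.card := by
  classical
  have hV : ∀ x ∈ V, (if x ∈ U then ({0}ᶜ : Finset F) else Finset.univ).card = Fintype.card F :=
    fun x hx => by rw [if_neg (Finset.disjoint_right.1 hUV hx), Finset.card_univ]
  have hU : ∀ x ∈ U, (if x ∈ U then ({0}ᶜ : Finset F) else Finset.univ).card =
      Fintype.card F - 1 := fun x hx => by
    rw [if_pos hx, Finset.card_compl, Finset.card_singleton]
  rw [solutions, Finset.filter_true_of_mem (by simp), Finset.card_finsupp,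
    Finset.prod_union hUV, Finset.prod_congr rfl hU, Finset.prod_congr rfl hV,
    Finset.prod_const, Finset.prod_const]

lemma card_solutions_insert (hxU : x ∉ U) (hxV : x ∉ V) (E : List Poly) :
    (solutions F U (insert x V) E).card =
      (solutions F U V E).card + (solutions F (insert x U) V E).card := by
  classical
  rw [← Finset.card_filter_add_card_filter_not fun ρ : ℕ →₀ F => ρ x = 0]
  congr 2
  all_goals
    ext ρ
    simp only [Finset.mem_filter, mem_solutions, Finset.mem_insert]
    grind

lemma mem_solutions_map_subst_iff {a : F} {s' : Poly} {ρ : ℕ →₀ F} (hx : x.Prime) (hxU : x ∉ U)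
    (ha : evalMonomial ρ m * a = eval ρ s')
    (hm : ∀ ρ : ℕ →₀ F, (∀ y ∈ U, ρ y ≠ 0) → evalMonomial ρ m ≠ 0) :
    ρ ∈ solutions F U (insert x V) (E.map (subst x m s')) ↔
      ρ.update x a ∈ solutions F U (insert x V) E := by
  have hU : (∀ y ∈ U, ρ.update x a y ≠ 0) ↔ ∀ y ∈ U, ρ y ≠ 0 :=
    forall₂_congr fun y hy => by
      rw [Finsupp.coe_update, Function.update_of_ne (ne_of_mem_of_not_mem hy hxU)]
  have hV : (∀ y, y ∉ U → y ∉ insert x V → ρ.update x a y = 0) ↔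
      ∀ y, y ∉ U → y ∉ insert x V → ρ y = 0 :=
    forall₃_congr fun y _ hy => by
      have hyx : y ≠ x := fun h => hy (Finset.mem_insert.2 (Or.inl h))
      rw [Finsupp.coe_update, Function.update_of_ne hyx]
  rw [mem_solutions, mem_solutions, hU, hV]
  refine and_congr_right fun hρ => and_congr_right fun _ => ?_
  simp only [List.forall_mem_map, eval_subst_eq_zero_iff hx ha (hm ρ hρ), Finsupp.coe_update]

lemma card_solutions_shift (hx : x.Prime) (hxU : x ∉ U) (hmx : ¬ x ∣ m) (hs : ∀ t ∈ s, ¬ x ∣ t.2)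
    (hm : ∀ ρ : ℕ →₀ F, (∀ y ∈ U, ρ y ≠ 0) → evalMonomial ρ m ≠ 0) :
    (solutions F U (insert x V) E).card =
      (solutions F U (insert x V) (E.map (subst x m (addTerm 1 x s)))).card := by
  have heval (ρ : ℕ →₀ F) : eval ρ (addTerm 1 x s) = ρ x + eval ρ s := by
    simp [eval_addTerm, evalMonomial_prime _ hx]
  have hmon {ρ : ℕ → F} {b : F} := evalMonomial_update ρ hmx b
  have hpoly {ρ : ℕ → F} {b : F} := eval_update ρ hs b
  refine Finset.card_nbij' (fun σ => σ.update x (evalMonomial σ m * σ x - eval σ s))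
    (fun ρ => ρ.update x ((ρ x + eval ρ s) / evalMonomial ρ m)) ?_ ?_ ?_ ?_
  · intro σ hσ
    refine (mem_solutions_map_subst_iff (a := σ x) hx hxU ?_ hm).2 ?_
    · rw [heval, Finsupp.coe_update, hmon, hpoly, Function.update_self, sub_add_cancel]
    · simpa using hσ
  · intro ρ hρ
    refine (mem_solutions_map_subst_iff hx hxU ?_ hm).1 hρ
    rw [heval, mul_div_cancel₀ _ (hm ρ (mem_solutions.1 hρ).1)]
  · intro σ hσ
    have hσm := hm σ (mem_solutions.1 hσ).1
    simp [hmon, hpoly, mul_div_cancel_left₀ _ hσm]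
  · intro ρ hρ
    have hρm := hm ρ (mem_solutions.1 hρ).1
    simp [hmon, hpoly, mul_div_cancel₀ _ hρm]

lemma card_solutions_branch (hx : x.Prime) (hxU : x ∉ U) (hxV : x ∉ V) (hmx : ¬ x ∣ m)
    (hs : ∀ t ∈ s, ¬ x ∣ t.2)
    (hm : ∀ ρ : ℕ →₀ F, (∀ y ∈ U, ρ y ≠ 0) → evalMonomial ρ m ≠ 0) :
    (solutions F U (insert x V) E).card =
      (solutions F U V (E.map (subst x m s))).card +
        (solutions F (insert x U) V (E.map (subst x m (addTerm 1 x s)))).card := by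
  rw [card_solutions_shift hx hxU hmx hs hm, card_solutions_insert hxU hxV]
  congr 2
  refine solutions_congr fun ρ hρU hρV => ?_
  have heval : eval ρ (addTerm 1 x s) = eval ρ s := by
    simp [eval_addTerm, evalMonomial_prime _ hx, hρV x hxU hxV]
  have ha : evalMonomial ρ m * (eval ρ s / evalMonomial ρ m) = eval ρ s :=
    mul_div_cancel₀ _ (hm ρ hρU)
  simp only [List.forall_mem_map, eval_subst_eq_zero_iff hx (ha.trans heval.symm) (hm ρ hρU),
    eval_subst_eq_zero_iff hx ha (hm ρ hρU)]

lemma card_solutions_insert_unit (hx : x.Prime) (hxU : x ∉ U) (hxV : x ∉ V) :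
    (solutions F (insert x U) V E).card + (solutions F U V (E.map (subst x 1 []))).card =
      (solutions F U (insert x V) E).card := by
  rw [card_solutions_insert hxU hxV, add_comm]
  congr 2
  refine solutions_congr fun ρ _ hρV => ?_
  have ha : evalMonomial ρ 1 * ρ x = eval ρ [] := by simp [hρV x hxU hxV]
  simp only [List.forall_mem_map, eval_subst_eq_zero_iff hx ha (by simp), Function.update_eq_self]

end Solutions

section Image

variable {F : Type*} [Field F] {ι : Type*} [Fintype ι] {e : ι → ℕ}

lemma extend_comp_eq (he : e.Injective) {ρ : ℕ → F}
    (hρ : ∀ x, x ∉ Finset.univ.image e → ρ x = 0) : Function.extend e (ρ ∘ e) 0 = ρ := by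
  funext x
  by_cases hx : ∃ i, e i = x
  · obtain ⟨i, rfl⟩ := hx
    exact he.extend_apply _ _ i
  · rw [Function.extend_apply' _ _ _ hx, hρ x (by simpa using hx), Pi.zero_apply]

lemma card_solutions_image [Fintype F] (he : e.Injective) (E : List Poly) :
    (solutions F ∅ (Finset.univ.image e) E).card =
      Nat.card {z : ι → F // ∀ p ∈ E, eval (Function.extend e z 0) p = 0} := by
  have hsupp (z : ι → F) (x : ℕ) (hx : x ∉ Finset.univ.image e) : Function.extend e z 0 x = 0 :=
    Function.extend_apply' _ _ _ (by simpa using hx)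
  have hext (ρ : ℕ →₀ F) (hρ : ρ ∈ solutions F ∅ (Finset.univ.image e) E) :
      Function.extend e (ρ ∘ e) 0 = ρ :=
    extend_comp_eq he fun x hx => (mem_solutions.1 hρ).2.1 x (Finset.notMem_empty x) hx
  let point (z : ι → F) : ℕ →₀ F := Finsupp.onFinset _ (Function.extend e z 0) fun x hx =>
    not_imp_comm.1 (hsupp z x) hx
  rw [← Fintype.card_coe, ← Nat.card_eq_fintype_card]
  exact Nat.card_congr
    { toFun ρ := ⟨ρ.1 ∘ e, by rw [hext _ ρ.2]; exact (mem_solutions.1 ρ.2).2.2⟩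
      invFun z := ⟨point z.1, mem_solutions.2 ⟨by simp, fun x _ => hsupp z.1 x, z.2⟩⟩
      left_inv ρ := Subtype.ext (DFunLike.coe_injective (hext _ ρ.2))
      right_inv z := Subtype.ext (funext fun i => he.extend_apply _ _ i) }

end Image

/-! ### The counting algorithm -/

/-- `p` divided by the largest divisor of `M` which divides all monomials of `p`. -/
def strip (M : ℕ) (p : Poly) : Poly :=
  let g := (p.foldr (fun t g => Nat.gcd t.2 g) 0).gcd M
  bif g.beq 1 then p else p.map fun t => (t.1, t.2 / g)

/-- Whether `p` is `± m` for a monomial `m` dividing `M`. -/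
def isUnit (M : ℕ) : Poly → Bool
  | [(c, m)] => c.natAbs = 1 ∧ m ∣ M
  | _ => false

/-- If `p = ± (m * x - s)`, where `m` divides `M` and `x` does not occur in `m` and `s`: the pair
`(m, s)`. -/
def pivot? (M x : ℕ) (p : Poly) : Option (ℕ × Poly) :=
  match divVar x p with
  | [(c, m)] =>
    if c.natAbs = 1 ∧ ¬ x ∣ m ∧ m ∣ M then some (m, mulTerm (-c) 1 (constCoeff x p)) else none
  | _ => none

/-- The coefficients of the variables in `W` in the polynomials in `E`. -/
def coeffs (W : List ℕ) (E : List Poly) : List Poly :=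
  E.flatMap fun p =>
    let g := p.foldr (fun t g => Nat.lcm t.2 g) 1
    W.filterMap fun x => bif (g % x).beq 0 then some (divVar x p) else none

/-- The pairs `(x, p)` with `p ∈ E` for which `pivot? M x p` succeeds and `x ∈ V`. The candidates
for `x` are the cofactors in the monomials of `p` of the divisors of `M`. -/
def freePivots (M : ℕ) (V : List ℕ) (E : List Poly) : List (ℕ × Poly) :=
  E.flatMap fun p => p.filterMap fun t =>
    let x := t.2 / t.2.gcd M
    bif !x.ble 1 && x.ble (V.foldr max 0) && (pivot? M x p).isSome && V.elem x then some (x, p)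
    else none

/-- The pairs `(x, p)` with `p ∈ E` and `x ∈ U` for which `pivot? M x p` succeeds. -/
def unitPivots (M : ℕ) (U : List ℕ) (E : List Poly) : List (ℕ × Poly) :=
  E.flatMap fun p => U.filterMap fun x => bif (pivot? M x p).isSome then some (x, p) else none

/-- The pairs `(x, x)` for the variables `x ∈ V` which occur in `E`. -/
def occurring (V : List ℕ) (E : List Poly) : List (ℕ × Poly) :=
  V.filterMap fun x =>
    bif E.any fun p => p.any fun t => (t.2 % x).beq 0 then some (x, [(1, x)]) else none

/-- A pair with the smallest variable. -/
def minVar? (l : List (ℕ × Poly)) : Option (ℕ × Poly) :=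
  l.foldr (init := none) fun a b => match b with
    | none => some a
    | some b => bif a.1.ble b.1 then some a else some b

/-- The polynomial `p = ± (m * x - s)` on whose vanishing the next case distinction is made, with
its variable `x`. By preference `p` is one of the equations, so that one of the two cases is void,
or a coefficient in one of them. -/
def choose (M : ℕ) (W U V : List ℕ) (E : List Poly) : Option (ℕ × Poly) :=
  (freePivots M V E).head? <|> minVar? (freePivots M V (coeffs W E)) <|>
    (unitPivots M U E).head? <|> (occurring V E).head? <|> (unitPivots M U (coeffs U E)).head?

/-- The number of common zeros of the polynomials in `E₀` with nonzero values of the variables in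
`U` and arbitrary values of those in `V`, as a polynomial in the variables `2` and `3`, which stand
for `q - 1` and `q`. With `p = ± (m * x - s)` a polynomial as in `choose` and `x' = m * x - s`, the
zeros with `x' = 0` and `x' ≠ 0` are counted separately; if `x ∈ U`, then the zeros with `x = 0` are
subtracted. The first number bounds the recursion depth, the exponent `9` is large enough for the
denominators which occur in practice, and `W` consists of the variables whose coefficients may be
used for case distinctions. -/
def count (W : List ℕ) : ℕ → List ℕ → List ℕ → List Poly → Option Poly
  | 0, _, _, _ => none
  | k + 1, U, V, E₀ =>
    let M := U.prod ^ 9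
    let E := (E₀.map (strip M)).filter (!·.isEmpty)
    if E.isEmpty then some [(1, 2 ^ U.length * 3 ^ V.length)]
    else if E.any (isUnit M) then some []
    else do
      let (x, p) ← choose M W U V E
      let (m, s) ← pivot? M x p
      let U' := U.erase x
      let V' := V.erase x
      let a ← count W k U' V' (E.map (subst x m s))
      let b ← count W k (x :: U') V' (E.map (subst x m (addTerm 1 x s)))
      if x ∈ V then some (add a b)
      else if x ∈ U then
        let c ← count W k U' V' (E.map (subst x 1 []))
        some (add (add a b) (mulTerm (-1) 1 c))
      else none

section Correctness

variable {F : Type*} [Field F] {M x m : ℕ} {s p : Poly}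

lemma foldr_gcd_dvd {t : ℤ × ℕ} (ht : t ∈ p) : p.foldr (fun t g => Nat.gcd t.2 g) 0 ∣ t.2 := by
  induction p with
  | nil => simp at ht
  | cons u p ih =>
    rcases List.mem_cons.1 ht with rfl | ht
    · exact Nat.gcd_dvd_left _ _
    · exact (Nat.gcd_dvd_right _ _).trans (ih ht)

lemma eval_strip_eq_zero_iff {ρ : ℕ → F} (hM : ∀ m, m ∣ M → evalMonomial ρ m ≠ 0) (p : Poly) :
    eval ρ (strip M p) = 0 ↔ eval ρ p = 0 := by
  set g := (p.foldr (fun t g => Nat.gcd t.2 g) 0).gcd M with hg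
  have hstrip : strip M p = p.map fun t => (t.1, t.2 / g) := by
    rw [strip, ← hg, beq_eq_decide]
    by_cases h1 : g = 1 <;> simp [h1]
  have hdiv (t) (ht : t ∈ p) : g ∣ t.2 := (Nat.gcd_dvd_left _ M).trans (foldr_gcd_dvd ht)
  have heval : eval ρ p = evalMonomial ρ g * eval ρ (strip M p) := by
    rw [hstrip, eval, eval, List.map_map, ← List.sum_map_mul_left]
    refine congrArg List.sum (List.map_congr_left fun t ht => ?_)
    rw [Function.comp_apply, mul_left_comm, ← map_mul, Nat.mul_div_cancel' (hdiv t ht)]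
  rw [heval, mul_eq_zero, or_iff_right (hM g (Nat.gcd_dvd_right _ M))]

lemma eval_ne_zero_of_isUnit {ρ : ℕ → F} (hM : ∀ m, m ∣ M → evalMonomial ρ m ≠ 0)
    (hp : isUnit M p) : eval ρ p ≠ 0 := by
  rw [isUnit.eq_def] at hp
  split at hp
  case h_1 c m =>
    obtain ⟨hc, hm⟩ := of_decide_eq_true hp
    rcases Int.natAbs_eq_iff.1 hc with rfl | rfl <;> simp [hM m hm]
  case h_2 => cases hp

lemma pivot?_eq_some (h : pivot? M x p = some (m, s)) :
    ¬ x ∣ m ∧ m ∣ M ∧ ∀ t ∈ s, ¬ x ∣ t.2 := by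
  rw [pivot?] at h
  split at h
  case h_1 c n _ =>
    obtain ⟨⟨-, hx, hM⟩, heq⟩ := Option.ite_none_right_eq_some.1 h
    obtain ⟨rfl, rfl⟩ := Prod.mk.inj (Option.some.inj heq)
    refine ⟨hx, hM, fun t ht => ?_⟩
    obtain ⟨u, hu, rfl⟩ := List.mem_map.1 ht
    simpa using not_dvd_of_mem_constCoeff hu
  case h_2 => cases h

lemma evalMonomial_ne_zero_of_dvd_prod_pow {U : List ℕ} {e : ℕ} (hU : ∀ y ∈ U, y.Prime)
    (hm : m ∣ U.prod ^ e) {ρ : ℕ → F} (hρ : ∀ y ∈ U, y ∣ m → ρ y ≠ 0) :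
    evalMonomial ρ m ≠ 0 := by
  have hU0 : U.prod ≠ 0 := List.prod_ne_zero fun h0 => Nat.not_prime_zero (hU 0 h0)
  refine evalMonomial_ne_zero ρ (ne_zero_of_dvd_ne_zero (pow_ne_zero e hU0) hm) fun y hy hym => ?_
  obtain ⟨z, hz, hyz⟩ := (Nat.Prime.prime hy).dvd_prod_iff.1 (hy.dvd_of_dvd_pow (hym.trans hm))
  obtain rfl := (Nat.prime_dvd_prime_iff_eq hy (hU z hz)).1 hyz
  exact hρ y hz hym

variable [Fintype F] {U V : List ℕ} {E : List Poly}

lemma solutions_strip (hU : ∀ y ∈ U, y.Prime) (e : ℕ) (V : Finset ℕ) (E : List Poly) :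
    solutions F U.toFinset V ((E.map (strip (U.prod ^ e))).filter (!·.isEmpty)) =
      solutions F U.toFinset V E := by
  refine solutions_congr fun ρ hρ _ => ?_
  have hM (m : ℕ) (hm : m ∣ U.prod ^ e) : evalMonomial ρ m ≠ 0 :=
    evalMonomial_ne_zero_of_dvd_prod_pow hU hm fun y hy _ => hρ y (List.mem_toFinset.2 hy)
  simp only [List.mem_filter, List.mem_map]
  refine ⟨fun h p hp => (eval_strip_eq_zero_iff hM p).1 ?_, ?_⟩
  · cases hnil : strip (U.prod ^ e) p with
    | nil => rfl
    | cons t r => exact h _ ⟨⟨p, hp, hnil⟩, rfl⟩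
  · rintro h _ ⟨⟨p, hp, rfl⟩, -⟩
    exact (eval_strip_eq_zero_iff hM p).2 (h p hp)

lemma solutions_eq_empty_of_isUnit (hU : ∀ y ∈ U, y.Prime) {e : ℕ} {V : Finset ℕ}
    (hE : E.any (isUnit (U.prod ^ e))) : solutions F U.toFinset V E = ∅ := by
  obtain ⟨p, hp, hunit⟩ := List.any_eq_true.1 hE
  refine Finset.eq_empty_of_forall_notMem fun ρ hρ => ?_
  obtain ⟨hρU, -, hρE⟩ := mem_solutions.1 hρ
  refine eval_ne_zero_of_isUnit (fun m hm => ?_) hunit (hρE p hp)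
  exact evalMonomial_ne_zero_of_dvd_prod_pow hU hm fun y hy _ => hρU y (List.mem_toFinset.2 hy)

lemma toFinset_eq_insert_erase {L : List ℕ} (hx : x ∈ L) :
    L.toFinset = insert x (L.erase x).toFinset := by
  rw [← List.toFinset_cons]
  exact List.toFinset_eq_of_perm _ _ (List.perm_cons_erase hx)

/-- The point at which the polynomials computed by `count` are evaluated: variable `2` stands for
`q - 1` and variable `3` for `q`. -/
def countPoint (q x : ℕ) : ℤ := if x = 2 then q - 1 else q

variable (F) in
lemma card_solutions_nil_eq_eval (hnodup : (U ++ V).Nodup) :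
    ((solutions F U.toFinset V.toFinset []).card : ℤ) =
      eval (countPoint (Fintype.card F)) [(1, 2 ^ U.length * 3 ^ V.length)] := by
  obtain ⟨hU, hV, hUV⟩ := List.nodup_append'.1 hnodup
  rw [card_solutions_nil (List.disjoint_toFinset_iff_disjoint.2 hUV),
    List.toFinset_card_of_nodup hU, List.toFinset_card_of_nodup hV]
  simp [evalMonomial_prime _ Nat.prime_two, evalMonomial_prime _ Nat.prime_three, countPoint,
    Nat.cast_pred Fintype.card_pos]

lemma nodup_cons_erase_append_erase (hnodup : (U ++ V).Nodup) (x : ℕ) :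
    (x :: (U.erase x ++ V.erase x)).Nodup := by
  obtain ⟨hU, hV, -⟩ := List.nodup_append'.1 hnodup
  refine List.nodup_cons.2
    ⟨fun h => ?_, (List.erase_sublist.append List.erase_sublist).nodup hnodup⟩
  exact (List.mem_append.1 h).elim hU.not_mem_erase hV.not_mem_erase

lemma card_solutions_branch_erase {e : ℕ} (hU : ∀ y ∈ U, y.Prime) (hx : x.Prime)
    (hnodup : (U ++ V).Nodup) (hpivot : pivot? (U.prod ^ e) x p = some (m, s)) :
    (solutions F (U.erase x).toFinset (insert x (V.erase x).toFinset) E).card =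
      (solutions F (U.erase x).toFinset (V.erase x).toFinset (E.map (subst x m s))).card +
        (solutions F (x :: U.erase x).toFinset (V.erase x).toFinset
          (E.map (subst x m (addTerm 1 x s)))).card := by
  obtain ⟨hxm, hm, hs⟩ := pivot?_eq_some hpivot
  obtain ⟨hxU, hxV⟩ := not_or.1
    (List.mem_append.not.1 (List.nodup_cons.1 (nodup_cons_erase_append_erase hnodup x)).1)
  rw [List.toFinset_cons]
  refine card_solutions_branch hx (by simpa using hxU) (by simpa using hxV) hxm hs fun ρ hρ => ?_
  refine evalMonomial_ne_zero_of_dvd_prod_pow hU hm fun y hy hym => hρ y ?_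
  have hyx : y ≠ x := by rintro rfl; exact hxm hym
  exact List.mem_toFinset.2 ((List.mem_erase_of_ne hyx).2 hy)

lemma card_solutions_add_card_solutions_erase (hx : x.Prime) (hxU : x ∈ U)
    (hnodup : (U ++ V).Nodup) :
    (solutions F U.toFinset V.toFinset E).card +
        (solutions F (U.erase x).toFinset (V.erase x).toFinset (E.map (subst x 1 []))).card =
      (solutions F (U.erase x).toFinset (insert x (V.erase x).toFinset) E).card := by
  obtain ⟨hxU', hxV'⟩ := not_or.1
    (List.mem_append.not.1 (List.nodup_cons.1 (nodup_cons_erase_append_erase hnodup x)).1)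
  have hxV : x ∉ V := (List.nodup_append'.1 hnodup).2.2 hxU
  rw [← card_solutions_insert_unit hx (List.mem_toFinset.not.2 hxU') (List.mem_toFinset.not.2 hxV'),
    ← toFinset_eq_insert_erase hxU, List.erase_of_not_mem hxV]

theorem card_solutions_eq_eval_count {W : List ℕ} {k : ℕ} {N : Poly}
    (hprime : ∀ x ∈ U ++ V, x.Prime) (hnodup : (U ++ V).Nodup) (h : count W k U V E = some N) :
    ((solutions F U.toFinset V.toFinset E).card : ℤ) = eval (countPoint (Fintype.card F)) N := by
  induction k generalizing U V E N with
  | zero => cases h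
  | succ k ih =>
    have hU (y) (hy : y ∈ U) : y.Prime := hprime y (List.mem_append_left V hy)
    rw [← solutions_strip hU 9]
    rw [count] at h
    dsimp only at h
    set E' := (E.map (strip (U.prod ^ 9))).filter (!·.isEmpty)
    split_ifs at h with hnil hunit
    · obtain rfl := Option.some.inj h
      rw [List.isEmpty_iff.1 hnil, card_solutions_nil_eq_eval F hnodup]
    · obtain rfl := Option.some.inj h
      simp [solutions_eq_empty_of_isUnit hU hunit]
    obtain ⟨⟨x, p⟩, -, h⟩ := Option.bind_eq_some_iff.1 h
    obtain ⟨⟨m, s⟩, hpivot, h⟩ := Option.bind_eq_some_iff.1 h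
    obtain ⟨a, ha, h⟩ := Option.bind_eq_some_iff.1 h
    obtain ⟨b, hb, h⟩ := Option.bind_eq_some_iff.1 h
    have herase : (x :: (U.erase x ++ V.erase x)).Nodup := nodup_cons_erase_append_erase hnodup x
    have hprime' (y) (hy : y ∈ U.erase x ++ V.erase x) : y.Prime :=
      hprime y ((List.erase_sublist.append List.erase_sublist).subset hy)
    have hcount (hx : x.Prime) : eval (countPoint (Fintype.card F)) a +
        eval (countPoint (Fintype.card F)) b =
          (solutions F (U.erase x).toFinset (insert x (V.erase x).toFinset) E').card := by
      rw [← ih hprime' herase.of_cons ha, ← ih (List.forall_mem_cons.2 ⟨hx, hprime'⟩) herase hb,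
        ← Nat.cast_add, card_solutions_branch_erase hU hx hnodup hpivot]
    split_ifs at h with hxV hxU
    · obtain rfl := Option.some.inj h
      have hxU : x ∉ U := fun hxU => (List.nodup_append'.1 hnodup).2.2 hxU hxV
      rw [eval_add, hcount (hprime x (List.mem_append_right U hxV)),
        ← toFinset_eq_insert_erase hxV, List.erase_of_not_mem hxU]
    · obtain ⟨c, hc, h⟩ := Option.bind_eq_some_iff.1 h
      obtain rfl := Option.some.inj h
      rw [eval_add, eval_add, hcount (hU x hxU), eval_mulTerm, ← ih hprime' herase.of_cons hc,
        ← card_solutions_add_card_solutions_erase (hU x hxU) hxU hnodup]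
      simp

end Correctness

/-! ### The equations dual to commutation -/

section System

variable {α l : Type*} [LinearOrder l]

/-- The symmetric matrix with the same upper triangle as `X`. -/
def symmPart (X : Matrix l l α) : Matrix l l α := .of fun i j => X (min i j) (max i j)

/-- The transpose of the strictly lower triangular part of `X`, where `z` stands for zero. Together
with `symmPart X` it determines `X`. -/
def strictUpperPart (z : α) (X : Matrix l l α) : Matrix l l α :=
  .of fun i j => if i < j then X j i else z

/-- The entries of the equations `T A + Aᵀ T = 0` (on and above the diagonal) and
`Bᵀ A - A Bᵀ - S T = 0` (below the diagonal), without the factor `2` on the diagonal. -/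
def dualSystem {R : Type*} [Ring R] [Fintype l] (T B S A : Matrix l l R) : Matrix l l R :=
  .of fun i j =>
    if i < j then (T * A) i j + (T * A) j i
    else if i = j then (T * A) i j
    else (B.transpose * A) i j - (A * B.transpose) i j - (S * T) i j

variable {n : ℕ}

/-- The product of two matrices of polynomials. -/
def polyMul (X Y : Matrix (Fin n) (Fin n) Poly) : Matrix (Fin n) (Fin n) Poly :=
  .of fun i j => (List.finRange n).foldr (fun k r => add (mul (X i k) (Y k j)) r) []

/-- The matrix `dualSystem T B S A` for matrices of polynomials. -/
def polyDualSystem (T B S A : Matrix (Fin n) (Fin n) Poly) : Matrix (Fin n) (Fin n) Poly :=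
  .of fun i j =>
    if i < j then add (polyMul T A i j) (polyMul T A j i)
    else if i = j then polyMul T A i j
    else add (polyMul B.transpose A i j) (add (mulTerm (-1) 1 (polyMul A B.transpose i j))
      (mulTerm (-1) 1 (polyMul S T i j)))

lemma polyMul_map_eval {R : Type*} [CommRing R] (ρ : ℕ → R)
    (X Y : Matrix (Fin n) (Fin n) Poly) :
    (polyMul X Y).map (eval ρ) = X.map (eval ρ) * Y.map (eval ρ) := by
  ext i j
  have hfold (L : List (Fin n)) : eval ρ (L.foldr (fun k r => add (mul (X i k) (Y k j)) r) []) =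
      (L.map fun k => eval ρ (X i k) * eval ρ (Y k j)).sum := by
    induction L with
    | nil => rfl
    | cons k L ih => rw [List.foldr_cons, eval_add, eval_mul, ih, List.map_cons, List.sum_cons]
  rw [Matrix.mul_apply, Fin.sum_univ_def]
  exact hfold _

lemma polyDualSystem_map_eval {R : Type*} [CommRing R] (ρ : ℕ → R)
    (T B S A : Matrix (Fin n) (Fin n) Poly) :
    (polyDualSystem T B S A).map (eval ρ) =
      dualSystem (T.map (eval ρ)) (B.map (eval ρ)) (S.map (eval ρ)) (A.map (eval ρ)) := by
  ext i j
  simp only [dualSystem, polyDualSystem, Matrix.of_apply, Matrix.map_apply,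
    ← Matrix.transpose_map, ← polyMul_map_eval]
  split_ifs
  · rw [eval_add]
  · rfl
  · simp only [eval_add, eval_mulTerm]
    simp [sub_eq_add_neg, add_assoc]

/-- The entries of `dualSystem`, for the matrices `T`, `B` and `S`, `A` which are cut out of two
generic matrices with entries `code (0, i, j)` and `code (1, i, j)`. -/
def genericSystem (code : Fin 2 × Fin n × Fin n → ℕ) : List Poly :=
  let X (k : Fin 2) : Matrix (Fin n) (Fin n) Poly := .of fun i j => [(1, code (k, i, j))]
  (List.finRange n ×ˢ List.finRange n).map fun a =>
    polyDualSystem (symmPart (X 0)) (strictUpperPart [] (X 0)) (symmPart (X 1))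
      (strictUpperPart [] (X 1)) a.1 a.2

lemma symmPart_map {β : Type*} (f : α → β) (X : Matrix l l α) :
    (symmPart X).map f = symmPart (X.map f) := rfl

lemma strictUpperPart_map {β : Type*} (f : α → β) (z : α) (X : Matrix l l α) :
    (strictUpperPart z X).map f = strictUpperPart (f z) (X.map f) := by
  ext i j
  exact apply_ite f _ _ _

lemma genericSystem_eval_eq_zero_iff {R : Type*} [CommRing R]
    {code : Fin 2 × Fin n × Fin n → ℕ} (hcode : ∀ a, (code a).Prime) (ρ : ℕ → R)
    (X : Fin 2 → Matrix (Fin n) (Fin n) R) (hX : ∀ k i j, ρ (code (k, i, j)) = X k i j) :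
    (∀ p ∈ genericSystem code, eval ρ p = 0) ↔
      dualSystem (symmPart (X 0)) (strictUpperPart 0 (X 0)) (symmPart (X 1))
        (strictUpperPart 0 (X 1)) = 0 := by
  have hmap (k : Fin 2) :
      (Matrix.of fun i j => [((1 : ℤ), code (k, i, j))]).map (eval ρ) = X k := by
    ext i j
    simp [evalMonomial_prime ρ (hcode (k, i, j)), hX]
  simp only [← hmap, ← eval_nil ρ, ← symmPart_map, ← strictUpperPart_map,
    ← polyDualSystem_map_eval, ← Matrix.ext_iff]
  simp only [genericSystem, List.forall_mem_map, List.mem_product, List.mem_finRange, true_and,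
    Prod.forall, forall_true_left, Matrix.map_apply, Matrix.zero_apply, eval_nil]

/-- The first `50` prime numbers. -/
def primeTable : List ℕ :=
  [2, 3, 5, 7, 11, 13, 17, 19, 23, 29, 31, 37, 41, 43, 47, 53, 59, 61, 67, 71, 73, 79, 83, 89, 97,
   101, 103, 107, 109, 113, 127, 131, 137, 139, 149, 151, 157, 163, 167, 173, 179, 181, 191, 193,
   197, 199, 211, 223, 227, 229]

/-- A numbering of the entries of two `5 × 5` matrices by prime numbers. -/
def entryCode (a : Fin 2 × Fin 5 × Fin 5) : ℕ :=
  primeTable.getD (25 * a.1 + 5 * a.2.1 + a.2.2) 0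

lemma prime_of_mem_primeTable : ∀ x ∈ primeTable, x.Prime := by
  decide +kernel

lemma nodup_primeTable : primeTable.Nodup := by
  decide +kernel

lemma entryCode_injective : Function.Injective entryCode := by
  decide +kernel

lemma image_entryCode : Finset.univ.image entryCode = primeTable.toFinset := by
  decide +kernel

/-- The variables below the diagonal of the second generic matrix, which are the entries of `A`. -/
def pivotVars : List ℕ :=
  ((List.finRange 5 ×ˢ List.finRange 5).filter fun a => a.2 < a.1).map fun a => entryCode (1, a)

/-- The polynomial of the theorem, in the variable `2`. -/
def classPoly : Poly :=
  [(2, 2 ^ 8), (24, 2 ^ 7), (132, 2 ^ 6), (395, 2 ^ 5), (630, 2 ^ 4), (500, 2 ^ 3), (180, 2 ^ 2),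
   (25, 2), (1, 1)]

/-- The one run of the algorithm: it returns `q ^ 25` times `classPoly`, up to the substitution of
`v + 1` for `q`, which brings both polynomials to normal form. -/
lemma count_genericSystem :
    (count pivotVars 40 [] primeTable (genericSystem entryCode)).map
        (fun N => subst 3 1 [(1, 2), (1, 1)] (add N (mulTerm (-1) (3 ^ 25) classPoly))) =
      some [] := by
  decide +kernel

lemma eval_countPoint_eq_of_subst_eq_nil {N P : Poly} {k : ℕ} (q : ℕ)
    (h : subst 3 1 [(1, 2), (1, 1)] (add N (mulTerm (-1) (3 ^ k) P)) = []) :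
    eval (countPoint q) N = q ^ k * eval (countPoint q) P := by
  have hq : evalMonomial (countPoint q) 1 * q = eval (countPoint q) [(1, 2), (1, 1)] := by
    simp [countPoint, evalMonomial_prime _ Nat.prime_two]
  have hupdate : Function.update (countPoint q) 3 q = countPoint q := Function.update_eq_self 3 _
  have hthree : evalMonomial (countPoint q) 3 = q := evalMonomial_prime _ Nat.prime_three
  obtain ⟨e, he⟩ := exists_eval_subst Nat.prime_three hq (add N (mulTerm (-1) (3 ^ k) P))
  rw [h, hupdate, eval_nil, map_one, one_pow, one_mul, eval_add, eval_mulTerm, map_pow,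
    hthree] at he
  push_cast at he
  linarith

lemma card_dualSystem_eq_zero (F : Type*) [Field F] [Fintype F] :
    (Nat.card {X : Fin 2 → Matrix (Fin 5) (Fin 5) F //
      dualSystem (symmPart (X 0)) (strictUpperPart 0 (X 0)) (symmPart (X 1))
        (strictUpperPart 0 (X 1)) = 0} : ℤ) =
      Fintype.card F ^ 25 * eval (countPoint (Fintype.card F)) classPoly := by
  obtain ⟨N, hN, hsubst⟩ := Option.map_eq_some_iff.1 count_genericSystem
  have hcode (a : Fin 2 × Fin 5 × Fin 5) : (entryCode a).Prime := by
    refine prime_of_mem_primeTable _ (List.mem_toFinset.1 ?_)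
    rw [← image_entryCode]
    exact Finset.mem_image_of_mem _ (Finset.mem_univ a)
  rw [← eval_countPoint_eq_of_subst_eq_nil _ hsubst, ← card_solutions_eq_eval_count (U := [])
    (V := primeTable) prime_of_mem_primeTable nodup_primeTable hN, ← image_entryCode,
    List.toFinset_nil, card_solutions_image entryCode_injective]
  refine congrArg Nat.cast (Nat.card_congr (Equiv.subtypeEquiv
    ((Equiv.curry _ _ _).trans (Equiv.piCongrRight fun _ => Equiv.curry _ _ _)).symm fun X => ?_))
  exact (genericSystem_eval_eq_zero_iff hcode _ X fun k i j =>
    entryCode_injective.extend_apply _ _ _).symm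

end System

/-! ### Strictly upper triangular matrices and the Cayley transform -/

section StrictlyUpper

open Matrix

variable {m α R : Type*} [LinearOrder α] {b : m → α}

/-- The matrix `M` is strictly upper triangular with respect to the ranking `b` of its indices. -/
def IsStrictlyUpper [Zero R] (b : m → α) (M : Matrix m m R) : Prop :=
  ∀ ⦃i j⦄, b j ≤ b i → M i j = 0

lemma IsStrictlyUpper.blockTriangular [Zero R] {M : Matrix m m R} (hM : IsStrictlyUpper b M) :
    M.BlockTriangular b :=
  fun _ _ hij => hM hij.le

lemma isStrictlyUpper_zero [Zero R] : IsStrictlyUpper b (0 : Matrix m m R) := fun _ _ _ => rfl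

lemma IsStrictlyUpper.add [AddZeroClass R] {M N : Matrix m m R} (hM : IsStrictlyUpper b M)
    (hN : IsStrictlyUpper b N) : IsStrictlyUpper b (M + N) := fun i j hij => by
  rw [Matrix.add_apply, hM hij, hN hij, add_zero]

lemma IsStrictlyUpper.smul [MulZeroClass R] (c : R) {M : Matrix m m R}
    (hM : IsStrictlyUpper b M) : IsStrictlyUpper b (c • M) := fun i j hij => by
  rw [Matrix.smul_apply, hM hij, smul_zero]

lemma IsStrictlyUpper.mul_blockTriangular [Fintype m] [NonUnitalNonAssocSemiring R]
    {M N : Matrix m m R} (hM : IsStrictlyUpper b M) (hN : N.BlockTriangular b) :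
    IsStrictlyUpper b (M * N) := fun i j hij => by
  rw [mul_apply]
  refine Finset.sum_eq_zero fun k _ => ?_
  obtain hki | hik := le_or_gt (b k) (b i)
  · rw [hM hki, zero_mul]
  · rw [hN (hij.trans_lt hik), mul_zero]

lemma IsStrictlyUpper.neg [Ring R] {M : Matrix m m R} (hM : IsStrictlyUpper b M) :
    IsStrictlyUpper b (-M) := by
  simpa only [neg_one_smul] using hM.smul (-1)

lemma IsStrictlyUpper.sub [Ring R] {M N : Matrix m m R} (hM : IsStrictlyUpper b M)
    (hN : IsStrictlyUpper b N) : IsStrictlyUpper b (M - N) := by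
  simpa only [sub_eq_add_neg] using hM.add hN.neg

lemma isStrictlyUpper_single [DecidableEq m] [Zero R] {i j : m} (hij : b i < b j) (c : R) :
    IsStrictlyUpper b (single i j c) := fun k l hkl =>
  single_apply_of_ne _ _ _ _ _ (by rintro ⟨rfl, rfl⟩; exact hij.not_ge hkl)

lemma diag_mul_of_blockTriangular [Fintype m] [NonUnitalNonAssocSemiring R]
    (hb : Function.Injective b) {M N : Matrix m m R} (hM : M.BlockTriangular b)
    (hN : N.BlockTriangular b) (i : m) : (M * N) i i = M i i * N i i := by
  rw [mul_apply]
  refine Finset.sum_eq_single i (fun k _ hki => ?_) fun hi => absurd (Finset.mem_univ i) hi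
  obtain hlt | hlt := (hb.ne hki).lt_or_gt
  · rw [hM hlt, zero_mul]
  · rw [hN hlt, mul_zero]

lemma diag_pow_of_blockTriangular [Fintype m] [DecidableEq m] [Semiring R]
    (hb : Function.Injective b) {M : Matrix m m R} (hM : M.BlockTriangular b) (k : ℕ) (i : m) :
    (M ^ k) i i = M i i ^ k := by
  induction k with
  | zero => rw [pow_zero, pow_zero, Matrix.one_apply_eq]
  | succ k ih => rw [pow_succ, pow_succ, diag_mul_of_blockTriangular hb (hM.pow k) hM, ih]

lemma isStrictlyUpper_sub_one_of_pow_eq_one [Fintype m] [DecidableEq m] [CommRing R]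
    [IsReduced R] {p : ℕ} [Fact p.Prime] [CharP R p] (hb : Function.Injective b)
    {M : Matrix m m R} (hM : M.BlockTriangular b) {k : ℕ} (hk : M ^ p ^ k = 1) :
    IsStrictlyUpper b (M - 1) := fun i j hij => by
  obtain hlt | heq := hij.lt_or_eq
  · exact hM.sub blockTriangular_one hlt
  · obtain rfl := hb heq
    have hdiag : M j j ^ p ^ k = 1 := by
      rw [← diag_pow_of_blockTriangular hb hM, hk, one_apply_eq]
    refine eq_zero_of_pow_eq_zero (n := p ^ k) ?_
    rw [Matrix.sub_apply, one_apply_eq, sub_pow_char_pow, hdiag, one_pow, sub_self]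

lemma det_eq_prod_diag_of_blockTriangular [Fintype m] [DecidableEq m] [CommRing R]
    (hb : Function.Injective b) {M : Matrix m m R} (hM : M.BlockTriangular b) :
    M.det = ∏ i, M i i := by
  let : LinearOrder m := LinearOrder.lift' b hb
  convert det_of_isUpperTriangular (M := M) hM

lemma IsStrictlyUpper.isUnit_det_smul_one_add [Fintype m] [DecidableEq m] [CommRing R]
    (hb : Function.Injective b) {M : Matrix m m R} (hM : IsStrictlyUpper b M) {c : R}
    (hc : IsUnit c) : IsUnit (c • (1 : Matrix m m R) + M).det := by
  rw [smul_one_eq_diagonal,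
    det_eq_prod_diag_of_blockTriangular hb ((blockTriangular_diagonal _).add hM.blockTriangular)]
  simpa [hM le_rfl] using hc.pow _

lemma blockTriangular_inv [Fintype m] [DecidableEq m] [CommRing R] {M : Matrix m m R}
    (hM : M.BlockTriangular b) : M⁻¹.BlockTriangular b := by
  by_cases h : IsUnit M.det
  · let := Matrix.invertibleOfIsUnitDet M h
    exact blockTriangular_inv_of_blockTriangular hM
  · rw [nonsing_inv_apply_not_isUnit _ h]
    exact blockTriangular_zero

attribute [local instance] LieRing.ofAssociativeRing

/-- The strictly upper triangular matrices as a Lie algebra. -/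
def strictlyUpper [Fintype m] [DecidableEq m] [CommRing R] (b : m → α) :
    LieSubalgebra R (Matrix m m R) where
  carrier := {M | IsStrictlyUpper b M}
  zero_mem' := isStrictlyUpper_zero
  add_mem' := IsStrictlyUpper.add
  smul_mem' c _ := IsStrictlyUpper.smul c
  lie_mem' hM hN :=
    (hM.mul_blockTriangular hN.blockTriangular).sub (hN.mul_blockTriangular hM.blockTriangular)

end StrictlyUpper

section Cayley

open Matrix

variable {m R : Type*} [Fintype m] [DecidableEq m] [CommRing R]

/-- The Cayley transform `(1 - X) (1 + X)⁻¹`, written with a single occurrence of `X`. -/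
noncomputable def cayley (X : Matrix m m R) : Matrix m m R := (2 : R) • (1 + X)⁻¹ - 1

lemma cayley_cayley (h2 : IsUnit (2 : R)) {X : Matrix m m R} (hX : IsUnit (1 + X).det) :
    cayley (cayley X) = X := by
  obtain ⟨c, hc⟩ := h2
  rw [cayley, cayley, add_sub_cancel, ← hc, ← Units.smul_def c (1 + X)⁻¹,
    inv_smul' _ c (by rwa [isUnit_nonsing_inv_det_iff]), nonsing_inv_nonsing_inv _ hX,
    ← Units.smul_def, smul_inv_smul, add_sub_cancel_left]

lemma commute_cayley {X Y : Matrix m m R} (h : Commute X Y) :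
    Commute (cayley X) (cayley Y) := by
  have hadd : Commute (1 + X) (1 + Y) :=
    (Commute.one_left _).add_left ((Commute.one_right X).add_right h)
  have hinv : Commute (1 + X)⁻¹ (1 + Y)⁻¹ := by
    rw [nonsing_inv_eq_ringInverse, nonsing_inv_eq_ringInverse]
    exact hadd.ringInverse_ringInverse
  exact (((hinv.smul_left _).smul_right _).sub_right (Commute.one_right _)).sub_left
    (Commute.one_left _)

lemma cayley_eq_mul_inv {X : Matrix m m R} (hX : IsUnit (1 + X).det) :
    cayley X = (1 - X) * (1 + X)⁻¹ := by
  rw [← mul_nonsing_inv_cancel_right (1 + X) (cayley X) hX]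
  congr 1
  rw [cayley, sub_mul, smul_mul_assoc, nonsing_inv_mul _ hX, one_mul, two_smul]
  abel

lemma cayley_mul_one_add {X : Matrix m m R} (hX : IsUnit (1 + X).det) :
    cayley X * (1 + X) = 1 - X := by
  rw [cayley_eq_mul_inv hX, nonsing_inv_mul_cancel_right _ _ hX]

lemma cayley_sub_one {X : Matrix m m R} (hX : IsUnit (1 + X).det) :
    cayley X - 1 = (-2 : R) • (X * (1 + X)⁻¹) := by
  have hinv : X * (1 + X)⁻¹ = 1 - (1 + X)⁻¹ := by
    rw [eq_sub_iff_add_eq, ← add_one_mul, add_comm X, mul_nonsing_inv _ hX]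
  rw [cayley, hinv, neg_smul, two_smul, two_smul]
  abel

lemma one_add_conj {g X : Matrix m m R} (hg : IsUnit g.det) :
    1 + g⁻¹ * X * g = g⁻¹ * (1 + X) * g := by
  rw [mul_add, add_mul, mul_one, nonsing_inv_mul _ hg]

lemma cayley_conj {g X : Matrix m m R} (hg : IsUnit g.det) :
    cayley (g⁻¹ * X * g) = g⁻¹ * cayley X * g := by
  rw [cayley, cayley, one_add_conj hg, Matrix.mul_inv_rev, Matrix.mul_inv_rev,
    nonsing_inv_nonsing_inv _ hg, mul_sub, sub_mul, mul_one, nonsing_inv_mul _ hg, mul_smul_comm,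
    smul_mul_assoc, mul_assoc]

lemma transpose_cayley_mul_mul_cayley_eq_iff (h2 : IsUnit (2 : R)) (J : Matrix m m R)
    {X : Matrix m m R} (hX : IsUnit (1 + X).det) :
    (cayley X)ᵀ * J * cayley X = J ↔ Xᵀ * J = J * -X := by
  have hconj : (1 + X)ᵀ * ((cayley X)ᵀ * J * cayley X - J) * (1 + X) =
      (-2 : R) • (Xᵀ * J - J * -X) := by
    calc _ = (cayley X * (1 + X))ᵀ * J * (cayley X * (1 + X)) - (1 + X)ᵀ * J * (1 + X) := by
          rw [transpose_mul]
          noncomm_ring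
      _ = _ := by
          rw [cayley_mul_one_add hX, neg_smul, two_smul, transpose_add, transpose_sub,
            transpose_one]
          noncomm_ring
  have hX' : IsUnit (1 + X) := (isUnit_iff_isUnit_det _).2 hX
  rw [← sub_eq_zero, ← ((1 + X).isUnit_transpose.2 hX').mul_right_eq_zero,
    ← hX'.mul_left_eq_zero, hconj, h2.neg.smul_eq_zero, sub_eq_zero]

end Cayley

section Duality

variable {F V ι : Type*} [Field F] [AddCommGroup V] [Module F V] [FiniteDimensional F V]

lemma nonempty_orthogonal_range_equiv_ker {B : V →ₗ[F] V →ₗ[F] F}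
    (hB : Function.Injective B) (T : V →ₗ[F] V) :
    Nonempty ({f // ∀ x, B f (T x) = 0} ≃ {f // T f = 0}) := by
  have hker : ((T.dualMap ∘ₗ B).ker : Set V) = {f | ∀ x, B f (T x) = 0} := by
    ext f
    exact LinearMap.ext_iff
  have hrange : (T.dualMap ∘ₗ B).range = T.dualMap.range :=
    LinearMap.range_comp_of_range_eq_top _ (LinearMap.range_eq_top.2
      ((LinearMap.injective_iff_surjective_of_finrank_eq_finrank
        Subspace.dual_finrank_eq.symm).1 hB))
  have hfinrank : Module.finrank F (T.dualMap ∘ₗ B).ker = Module.finrank F T.ker := by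
    have h := (T.dualMap ∘ₗ B).finrank_range_add_finrank_ker
    rw [hrange, T.finrank_range_dualMap_eq_finrank_range, ← T.finrank_range_add_finrank_ker] at h
    exact Nat.add_left_cancel h
  exact ⟨(Equiv.setCongr hker.symm).trans (LinearEquiv.ofFinrankEq _ _ hfinrank).toEquiv⟩

lemma card_map_eq_zero_eq_card_orthogonal_range {B : V →ₗ[F] V →ₗ[F] F}
    (hB : Function.Injective B) (T : ι → V →ₗ[F] V) :
    Nat.card {a : ι × V // T a.1 a.2 = 0} = Nat.card {a : ι × V // ∀ x, B a.2 (T a.1 x) = 0} := by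
  have e (i : ι) := Classical.choice (nonempty_orthogonal_range_equiv_ker hB (T i))
  exact Nat.card_congr (((Equiv.subtypeProdEquivSigmaSubtype _).trans
    (Equiv.sigmaCongrRight fun i => (e i).symm)).trans
      (Equiv.subtypeProdEquivSigmaSubtype _).symm)

end Duality

/-! ### The Lie algebra of a maximal unipotent subgroup -/

section BorelNilradical

open Matrix

attribute [local instance] LieRing.ofAssociativeRing

variable {l R : Type*}

/-- The ranking of the standard basis `e₁, …, eₙ, f₁, …, fₙ` in which `e₁ < ⋯ < eₙ < fₙ < ⋯ < f₁`,
so that its initial segments span isotropic flags and their orthogonal complements. -/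
def flagRank (i : l ⊕ l) : l ⊕ₗ lᵒᵈ := toLex (i.map id OrderDual.toDual)

lemma flagRank_injective : Function.Injective (flagRank (l := l)) :=
  toLex.injective.comp (Function.injective_id.sumMap OrderDual.toDual.injective)

variable [LinearOrder l]

lemma isStrictlyUpper_fromBlocks_iff [Zero R] {A S C D : Matrix l l R} :
    IsStrictlyUpper flagRank (fromBlocks A S C D) ↔
      IsStrictlyUpper id A ∧ C = 0 ∧ IsStrictlyUpper id Dᵀ := by
  simp only [IsStrictlyUpper, flagRank, Sum.forall, Sum.map_inl, Sum.map_inr, id_eq,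
    Sum.Lex.inl_le_inl_iff, Sum.Lex.inr_le_inr_iff, Sum.Lex.inl_le_inr, Sum.Lex.not_inr_le_inl,
    OrderDual.toDual_le_toDual, fromBlocks_apply₁₁, fromBlocks_apply₂₁, fromBlocks_apply₂₂,
    ← Matrix.ext_iff, transpose_apply, Matrix.zero_apply, forall_true_left, false_imp_iff,
    implies_true, forall_and, true_and, and_assoc]
  exact and_congr_right' (and_congr_right' forall_comm)

lemma isSymm_symmPart (M : Matrix l l R) : (symmPart M).IsSymm := by
  ext i j
  simp [symmPart, min_comm, max_comm]

lemma isStrictlyUpper_strictUpperPart [Zero R] (M : Matrix l l R) :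
    IsStrictlyUpper id (strictUpperPart 0 M) := fun _ _ hij => if_neg (not_lt_of_ge hij)

lemma strictUpperPart_of_ite [Zero R] {A : Matrix l l R} (hA : IsStrictlyUpper id A)
    (S : Matrix l l R) : strictUpperPart 0 (.of fun i j => if j < i then A j i else S i j) = A := by
  ext i j
  obtain hij | hji := lt_or_ge i j
  · simp [strictUpperPart, hij]
  · simp [strictUpperPart, hji.not_gt, hA hji]

lemma symmPart_of_ite (A : Matrix l l R) {S : Matrix l l R} (hS : S.IsSymm) :
    symmPart (.of fun i j => if j < i then A j i else S i j) = S := by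
  ext i j
  obtain hij | hji := le_total i j
  · simp [symmPart, hij]
  · simp [symmPart, hji, hS.apply]

variable [Fintype l] [CommRing R]

variable (l R) in
/-- The Lie algebra of a maximal unipotent subgroup of the symplectic group. -/
def borelNilradical : LieSubalgebra R (Matrix (l ⊕ l) (l ⊕ l) R) :=
  LieAlgebra.Symplectic.sp l R ⊓ strictlyUpper flagRank

lemma mem_borelNilradical {X : Matrix (l ⊕ l) (l ⊕ l) R} :
    X ∈ borelNilradical l R ↔ Xᵀ * J l R = J l R * -X ∧ IsStrictlyUpper flagRank X := by
  exact and_congr_left' ((mem_skewAdjointMatricesLieSubalgebra _ _).trans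
    (mem_skewAdjointMatricesSubmodule _ _))

lemma fromBlocks_mem_borelNilradical {A S C D : Matrix l l R} :
    fromBlocks A S C D ∈ borelNilradical l R ↔
      IsStrictlyUpper id A ∧ S.IsSymm ∧ C = 0 ∧ D = -Aᵀ := by
  have hsymp : (fromBlocks A S C D)ᵀ * J l R = J l R * -fromBlocks A S C D ↔
      Cᵀ = C ∧ D = -Aᵀ ∧ S.IsSymm := by
    simp only [J, fromBlocks_transpose, fromBlocks_multiply, fromBlocks_neg, fromBlocks_inj,
      mul_zero, mul_one, zero_mul, one_mul, mul_neg, neg_mul, neg_neg, neg_zero, zero_add, add_zero,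
      neg_inj]
    refine and_congr_right' ⟨fun ⟨hA, _, hS⟩ => ⟨hA.symm, hS⟩, fun ⟨hD, hS⟩ => ⟨hD.symm, ?_, hS⟩⟩
    rw [hD, transpose_neg, transpose_transpose]
  rw [mem_borelNilradical, isStrictlyUpper_fromBlocks_iff, hsymp]
  constructor
  · rintro ⟨⟨-, hD, hS⟩, hA, hC, -⟩
    exact ⟨hA, hS, hC, hD⟩
  · rintro ⟨hA, hS, rfl, rfl⟩
    refine ⟨⟨transpose_zero, rfl, hS⟩, hA, rfl, ?_⟩
    rw [transpose_neg, transpose_transpose]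
    exact hA.neg

lemma exists_of_mem_borelNilradical {X : Matrix (l ⊕ l) (l ⊕ l) R}
    (hX : X ∈ borelNilradical l R) : ∃ A S : Matrix l l R,
      IsStrictlyUpper id A ∧ S.IsSymm ∧ fromBlocks A S 0 (-Aᵀ) = X := by
  obtain ⟨hA, hS, hC, hD⟩ := fromBlocks_mem_borelNilradical.1 (X.fromBlocks_toBlocks.symm ▸ hX)
  exact ⟨_, _, hA, hS, by rw [← hC, ← hD, fromBlocks_toBlocks]⟩

/-- An element of `borelNilradical l R` is determined by an arbitrary square matrix: the upper
triangle of its symmetric block and the strictly upper triangle of its diagonal block. -/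
def borelCoordinates : Matrix l l R ≃ borelNilradical l R where
  toFun M := ⟨fromBlocks (strictUpperPart 0 M) (symmPart M) 0 (-(strictUpperPart 0 M)ᵀ),
    fromBlocks_mem_borelNilradical.2
      ⟨isStrictlyUpper_strictUpperPart M, isSymm_symmPart M, rfl, rfl⟩⟩
  invFun X := .of fun i j => if j < i then X.1 (.inl j) (.inl i) else X.1 (.inl i) (.inr j)
  left_inv M := by
    ext i j
    obtain hji | hij := lt_or_ge j i
    · simp [strictUpperPart, hji]
    · simp [symmPart, hij]
  right_inv X := by
    obtain ⟨A, S, hA, hS, hX⟩ := exists_of_mem_borelNilradical X.2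
    refine Subtype.ext ?_
    simp only [← hX, fromBlocks_apply₁₁, fromBlocks_apply₁₂,
      strictUpperPart_of_ite hA, symmPart_of_ite A hS]

lemma trace_fromBlocks_mul (P Q S A S' : Matrix l l R) :
    (fromBlocks P Q S (-Pᵀ) * fromBlocks A S' 0 (-Aᵀ)).trace =
      2 * (P * A).trace + (S * S').trace := by
  have htrace (M N O U : Matrix l l R) : (fromBlocks M N O U).trace = M.trace + U.trace := by
    simp [trace]
  rw [fromBlocks_multiply, htrace, neg_mul_neg, ← transpose_mul, mul_zero, add_zero, trace_add,
    trace_transpose, trace_mul_comm A P]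
  ring

lemma forall_trace_mul_eq_zero_iff (h2 : IsUnit (2 : R)) {P Q S : Matrix l l R} (hS : S.IsSymm) :
    (∀ X ∈ borelNilradical l R, (fromBlocks P Q S (-Pᵀ) * X).trace = 0) ↔
      (∀ i j, j < i → P i j = 0) ∧ S = 0 := by
  constructor
  · intro h
    refine ⟨fun i j hji => ?_, ?_⟩
    · have htr := h _ (fromBlocks_mem_borelNilradical.2
        ⟨isStrictlyUpper_single (b := id) hji 1, isSymm_zero, rfl, rfl⟩)
      rw [trace_fromBlocks_mul, mul_zero, trace_zero, add_zero, h2.mul_right_eq_zero,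
        trace_mul_single] at htr
      simpa using htr
    · ext i j
      have hS' : (single i j (1 : R) + single j i 1).IsSymm := by
        rw [IsSymm, transpose_add, transpose_single, transpose_single, add_comm]
      have htr := h _ (fromBlocks_mem_borelNilradical.2 ⟨isStrictlyUpper_zero, hS', rfl, rfl⟩)
      rw [trace_fromBlocks_mul, mul_zero, trace_zero, mul_zero, zero_add, mul_add, trace_add,
        trace_mul_single, trace_mul_single, hS.apply] at htr
      simpa [← two_mul, h2.mul_right_eq_zero] using htr
  · rintro ⟨hP, rfl⟩ X hX
    obtain ⟨A, S', hA, -, rfl⟩ := exists_of_mem_borelNilradical hX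
    have hPA : (P * A).trace = 0 := by
      refine Finset.sum_eq_zero fun i _ => ?_
      rw [diag_apply, mul_apply]
      refine Finset.sum_eq_zero fun k _ => ?_
      obtain hki | hik := lt_or_ge k i
      · rw [hP i k hki, zero_mul]
      · rw [hA hik, mul_zero]
    rw [trace_fromBlocks_mul, hPA, zero_mul, trace_zero, mul_zero, add_zero]

variable (l R) in
/-- The form `(X, Y) ↦ tr (Xᵀ Y)`, which identifies `borelNilradical l R` with its dual. -/
def traceForm : borelNilradical l R →ₗ[R] borelNilradical l R →ₗ[R] R :=
  LinearMap.mk₂ R (fun X Y => (X.1ᵀ * Y.1).trace) (by simp [add_mul]) (by simp) (by simp [mul_add])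
    (by simp)

lemma traceForm_injective (h2 : IsUnit (2 : R)) : Function.Injective (traceForm l R) := by
  refine (injective_iff_map_eq_zero _).2 fun X hX => ?_
  obtain ⟨A, S, hA, hS, hX'⟩ := exists_of_mem_borelNilradical X.2
  have htr : ∀ Y ∈ borelNilradical l R, (fromBlocks Aᵀ 0 S (-Aᵀᵀ) * Y).trace = 0 := fun Y hY => by
    have h : (X.1ᵀ * Y).trace = 0 := LinearMap.congr_fun hX ⟨Y, hY⟩
    rwa [← hX', fromBlocks_transpose, hS, transpose_zero, transpose_neg] at h
  obtain ⟨hAlow, rfl⟩ := (forall_trace_mul_eq_zero_iff h2 hS).1 htr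
  have hA0 : A = 0 := by
    ext i j
    obtain hij | hji := lt_or_ge i j
    · exact hAlow j i hij
    · exact hA hji
  ext : 1
  rw [← hX', hA0]
  simp

lemma dualSystem_eq_zero_iff (h2 : IsUnit (2 : R)) (T B S A : Matrix l l R) :
    dualSystem T B S A = 0 ↔
      (∀ i j, j < i → (Bᵀ * A - A * Bᵀ - S * T) i j = 0) ∧ T * A + (T * A)ᵀ = 0 := by
  simp only [← Matrix.ext_iff, dualSystem, of_apply, Matrix.zero_apply, Matrix.add_apply,
    transpose_apply, Matrix.sub_apply]
  constructor
  · intro h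
    have hupper (i j : l) (hij : i < j) : (T * A) i j + (T * A) j i = 0 := by
      simpa [hij] using h i j
    refine ⟨fun i j hji => by simpa [hji.not_gt, hji.ne'] using h i j, fun i j => ?_⟩
    obtain hij | rfl | hji := lt_trichotomy i j
    · exact hupper i j hij
    · have hdiag : (T * A) i i = 0 := by simpa using h i i
      rw [hdiag, add_zero]
    · rw [add_comm, hupper j i hji]
  · rintro ⟨hlow, hsymm⟩ i j
    split_ifs with hij heq
    · exact hsymm i j
    · subst heq
      exact h2.mul_right_eq_zero.1 ((two_mul _).trans (hsymm i i))
    · exact hlow i j (lt_of_le_of_ne (not_lt.1 hij) (Ne.symm heq))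

lemma trace_mul_commutator {m : Type*} [Fintype m] (Z Y X : Matrix m m R) :
    (Z * (Y * X - X * Y)).trace = ((Z * Y - Y * Z) * X).trace := by
  rw [mul_sub, sub_mul, trace_sub, trace_sub, mul_assoc, mul_assoc, ← mul_assoc Z X Y,
    trace_mul_comm (Z * X) Y]

lemma transpose_fromBlocks_commutator {T S : Matrix l l R} (hT : T.IsSymm) (hS : S.IsSymm)
    (B A : Matrix l l R) :
    (fromBlocks B T 0 (-Bᵀ))ᵀ * fromBlocks A S 0 (-Aᵀ) -
        fromBlocks A S 0 (-Aᵀ) * (fromBlocks B T 0 (-Bᵀ))ᵀ =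
      fromBlocks (Bᵀ * A - A * Bᵀ - S * T) (Bᵀ * S + S * B) (T * A + (T * A)ᵀ)
        (-(Bᵀ * A - A * Bᵀ - S * T)ᵀ) := by
  rw [sub_eq_add_neg]
  simp only [fromBlocks_transpose, fromBlocks_multiply, fromBlocks_neg, fromBlocks_add,
    transpose_sub, transpose_mul, transpose_neg, transpose_transpose, transpose_zero, hT.eq, hS.eq]
  congr 1 <;> noncomm_ring

lemma forall_traceForm_lie_eq_zero_iff (h2 : IsUnit (2 : R)) (M N : Matrix l l R) :
    (∀ X, traceForm l R (borelCoordinates M) ⁅borelCoordinates N, X⁆ = 0) ↔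
      dualSystem (symmPart M) (strictUpperPart 0 M) (symmPart N) (strictUpperPart 0 N) = 0 := by
  rw [dualSystem_eq_zero_iff h2, ← forall_trace_mul_eq_zero_iff h2
    (isSymm_add_transpose_self _),
    ← transpose_fromBlocks_commutator (isSymm_symmPart M) (isSymm_symmPart N), Subtype.forall]
  simp only [← trace_mul_commutator]
  rfl

lemma card_lie_eq_zero_eq_card_dualSystem_eq_zero {F : Type*} [Field F] (h2 : (2 : F) ≠ 0) :
    Nat.card {a : borelNilradical l F × borelNilradical l F // ⁅a.1, a.2⁆ = 0} =
      Nat.card {X : Fin 2 → Matrix l l F //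
        dualSystem (symmPart (X 0)) (strictUpperPart 0 (X 0)) (symmPart (X 1))
          (strictUpperPart 0 (X 1)) = 0} := by
  refine (card_map_eq_zero_eq_card_orthogonal_range (traceForm_injective h2.isUnit)
    fun Y => (LieAlgebra.ad F (borelNilradical l F) Y)).trans (Nat.card_congr
      (Equiv.subtypeEquiv ?_ ?_)).symm
  · exact (finTwoArrowEquiv _).trans ((Equiv.prodComm _ _).trans
      (Equiv.prodCongr borelCoordinates borelCoordinates))
  · exact fun X => (forall_traceForm_lie_eq_zero_iff h2.isUnit _ _).symm

end BorelNilradical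

/-! ### The maximal unipotent subgroup -/

section Groups

lemma card_conjClasses_congr {G H : Type*} [Monoid G] [Monoid H] (e : G ≃* H) :
    Nat.card (ConjClasses G) = Nat.card (ConjClasses H) := by
  refine Nat.card_congr
    (Quotient.congr e.toEquiv fun a b => ⟨e.toMonoidHom.map_isConj, fun h => ?_⟩)
  have hab : IsConj (e.symm (e a)) (e.symm (e b)) := e.symm.toMonoidHom.map_isConj h
  rwa [e.symm_apply_apply, e.symm_apply_apply] at hab

lemma coe_sylow_eq_of_mem_normalizer {G : Type*} [Group G] [Finite G] {p : ℕ} [Fact p.Prime]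
    {H : Subgroup G} (hH : ∀ g ∈ Subgroup.normalizer (H : Set G), (∃ k, g ^ p ^ k = 1) → g ∈ H)
    (Q : Sylow p G) (hQ : H ≤ Q) : (Q : Subgroup G) = H := by
  by_contra hne
  have : Group.IsNilpotent Q := Q.isPGroup'.isNilpotent
  have hlt : H.subgroupOf Q < ⊤ := lt_top_iff_ne_top.2 fun h =>
    hne (le_antisymm (Subgroup.subgroupOf_eq_top.1 h) hQ)
  obtain ⟨g, hg, hgH⟩ := SetLike.exists_of_lt (Group.normalizerCondition_of_isNilpotent _ hlt)
  refine hgH (Subgroup.mem_subgroupOf.2 (hH g ?_ ?_))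
  · rw [← Subgroup.subgroupOf_normalizer_eq hQ] at hg
    exact Subgroup.mem_subgroupOf.1 hg
  · obtain ⟨k, hk⟩ := Q.isPGroup' g
    exact ⟨k, by simpa using congrArg Subtype.val hk⟩

end Groups

section BorelUnipotent

open Matrix

attribute [local instance] LieRing.ofAssociativeRing

variable {l R : Type*} [LinearOrder l] [Fintype l] [CommRing R]

variable (l R) in
/-- The unipotent radical of a Borel subgroup of the symplectic group. -/
def borelUnipotent : Subgroup (symplecticGroup l R) where
  carrier := {g | IsStrictlyUpper flagRank (g.1 - 1)}
  one_mem' := by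
    simpa using isStrictlyUpper_zero
  mul_mem' {g h} hg hh := by
    have hmul : (g * h).1 - 1 = (g.1 - 1) * (h.1 - 1 + 1) + (h.1 - 1) := by
      rw [Submonoid.coe_mul]
      noncomm_ring
    rw [Set.mem_ofPred_eq, hmul]
    exact (hg.mul_blockTriangular (hh.blockTriangular.add blockTriangular_one)).add hh
  inv_mem' {g} hg := by
    have hdet : IsUnit g.1.det := SymplecticGroup.symplectic_det g.2
    have hinv : (g⁻¹).1 - 1 = -((g.1 - 1) * (g.1 - 1 + 1)⁻¹) := by
      rw [SymplecticGroup.coe_inv', sub_add_cancel, sub_mul, mul_nonsing_inv _ hdet, one_mul,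
        neg_sub]
    rw [Set.mem_ofPred_eq, hinv]
    exact (hg.mul_blockTriangular
      (blockTriangular_inv (hg.blockTriangular.add blockTriangular_one))).neg

lemma mem_borelUnipotent {g : symplecticGroup l R} :
    g ∈ borelUnipotent l R ↔ IsStrictlyUpper flagRank (g.1 - 1) := Iff.rfl

lemma isUnit_det_one_add_of_mem_borelNilradical {X : Matrix (l ⊕ l) (l ⊕ l) R}
    (hX : X ∈ borelNilradical l R) : IsUnit (1 + X).det := by
  simpa using (mem_borelNilradical.1 hX).2.isUnit_det_smul_one_add flagRank_injective isUnit_one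

lemma isUnit_det_one_add_of_mem_borelUnipotent (h2 : IsUnit (2 : R)) {g : symplecticGroup l R}
    (hg : g ∈ borelUnipotent l R) : IsUnit (1 + g.1).det := by
  have h := (mem_borelUnipotent.1 hg).isUnit_det_smul_one_add flagRank_injective h2
  rwa [two_smul, add_assoc, add_sub_cancel] at h

lemma cayley_mem_symplecticGroup (h2 : IsUnit (2 : R)) {X : Matrix (l ⊕ l) (l ⊕ l) R}
    (hX : X ∈ borelNilradical l R) : cayley X ∈ symplecticGroup l R :=
  SymplecticGroup.mem_iff'.2 ((transpose_cayley_mul_mul_cayley_eq_iff h2 _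
    (isUnit_det_one_add_of_mem_borelNilradical hX)).2 (mem_borelNilradical.1 hX).1)

lemma cayley_mem_borelUnipotent (h2 : IsUnit (2 : R)) {X : Matrix (l ⊕ l) (l ⊕ l) R}
    (hX : X ∈ borelNilradical l R) :
    (⟨cayley X, cayley_mem_symplecticGroup h2 hX⟩ : symplecticGroup l R) ∈ borelUnipotent l R := by
  have hX' := (mem_borelNilradical.1 hX).2
  rw [mem_borelUnipotent, cayley_sub_one (isUnit_det_one_add_of_mem_borelNilradical hX)]
  exact (hX'.mul_blockTriangular
    (blockTriangular_inv (blockTriangular_one.add hX'.blockTriangular))).smul _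

lemma cayley_mem_borelNilradical (h2 : IsUnit (2 : R)) {g : symplecticGroup l R}
    (hg : g ∈ borelUnipotent l R) : cayley g.1 ∈ borelNilradical l R := by
  have hdet := isUnit_det_one_add_of_mem_borelUnipotent h2 hg
  have hupper : IsStrictlyUpper flagRank (cayley g.1) := by
    have hg' : g.1.BlockTriangular flagRank := by
      simpa using hg.blockTriangular.add blockTriangular_one
    rw [cayley_eq_mul_inv hdet, ← neg_sub]
    exact hg.neg.mul_blockTriangular (blockTriangular_inv (blockTriangular_one.add hg'))
  have hdet' : IsUnit (1 + cayley g.1).det := by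
    simpa using hupper.isUnit_det_smul_one_add flagRank_injective isUnit_one
  refine mem_borelNilradical.2
    ⟨(transpose_cayley_mul_mul_cayley_eq_iff h2 (J l R) hdet').1 ?_, hupper⟩
  rw [cayley_cayley h2 hdet]
  exact SymplecticGroup.mem_iff'.1 g.2

/-- The Cayley transform, as a substitute for the exponential map: it needs only `2` to be
invertible, and it preserves commutation. -/
noncomputable def cayleyEquiv (h2 : IsUnit (2 : R)) : borelUnipotent l R ≃ borelNilradical l R where
  toFun g := ⟨cayley g.1.1, cayley_mem_borelNilradical h2 g.2⟩
  invFun X := ⟨⟨cayley X.1, cayley_mem_symplecticGroup h2 X.2⟩, cayley_mem_borelUnipotent h2 X.2⟩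
  left_inv g := Subtype.ext <| Subtype.ext <|
    cayley_cayley h2 (isUnit_det_one_add_of_mem_borelUnipotent h2 g.2)
  right_inv X := Subtype.ext <|
    cayley_cayley h2 (isUnit_det_one_add_of_mem_borelNilradical X.2)

lemma commute_iff_lie_cayleyEquiv_eq_zero (h2 : IsUnit (2 : R)) (g h : borelUnipotent l R) :
    Commute g h ↔ ⁅cayleyEquiv h2 g, cayleyEquiv h2 h⁆ = 0 := by
  have hlie : ⁅cayleyEquiv h2 g, cayleyEquiv h2 h⁆ = 0 ↔
      Commute (cayley g.1.1) (cayley h.1.1) := by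
    rw [commute_iff_lie_eq, Subtype.ext_iff]
    rfl
  have hcomm : Commute g h ↔ Commute g.1.1 h.1.1 := by
    simp only [Commute, SemiconjBy, Subtype.ext_iff]
    rfl
  rw [hlie, hcomm]
  refine ⟨commute_cayley, fun hc => ?_⟩
  simpa only [cayley_cayley h2 (isUnit_det_one_add_of_mem_borelUnipotent h2 g.2),
    cayley_cayley h2 (isUnit_det_one_add_of_mem_borelUnipotent h2 h.2)] using commute_cayley hc

lemma card_commute_borelUnipotent (h2 : IsUnit (2 : R)) :
    Nat.card {a : borelUnipotent l R × borelUnipotent l R // Commute a.1 a.2} =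
      Nat.card {a : borelNilradical l R × borelNilradical l R // ⁅a.1, a.2⁆ = 0} :=
  Nat.card_congr (Equiv.subtypeEquiv (Equiv.prodCongr (cayleyEquiv h2) (cayleyEquiv h2))
    fun a => commute_iff_lie_cayleyEquiv_eq_zero h2 a.1 a.2)

lemma card_borelUnipotent (h2 : IsUnit (2 : R)) :
    Nat.card (borelUnipotent l R) = Nat.card R ^ Fintype.card l ^ 2 := by
  rw [Nat.card_congr ((cayleyEquiv h2).trans borelCoordinates.symm), Matrix,
    Nat.card_fun, Nat.card_fun, Nat.card_eq_fintype_card (α := l), ← pow_mul, sq]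

lemma exists_mem_borelNilradical_row_eq_single {i j : l ⊕ l} (hji : flagRank j < flagRank i) :
    ∃ N ∈ borelNilradical l R, N j = Pi.single i 1 := by
  obtain i | i := i <;> obtain j | j := j
  · have hji' : j < i := Sum.Lex.inl_lt_inl_iff.1 hji
    refine ⟨_, fromBlocks_mem_borelNilradical.2
      ⟨isStrictlyUpper_single (b := id) hji' 1, isSymm_zero, rfl, rfl⟩, ?_⟩
    ext (k | k) <;> simp [single_apply, Pi.single_apply, eq_comm]
  · exact absurd hji Sum.Lex.not_inr_lt_inl
  · have hsymm : (.of fun x y => if s(x, y) = s(j, i) then 1 else 0 : Matrix l l R).IsSymm := by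
      ext x y
      simp only [transpose_apply, of_apply, Sym2.eq_swap]
    refine ⟨_, fromBlocks_mem_borelNilradical.2 ⟨isStrictlyUpper_zero, hsymm, rfl, rfl⟩, ?_⟩
    ext (k | k)
    · simp
    · simp only [fromBlocks_apply₁₂, of_apply, Sym2.congr_right]
      simp [Pi.single_apply]
  · have hij : OrderDual.toDual j < OrderDual.toDual i := Sum.Lex.inr_lt_inr_iff.1 hji
    refine ⟨_, fromBlocks_mem_borelNilradical.2
      ⟨(isStrictlyUpper_single (b := id) (OrderDual.toDual_lt_toDual.1 hij) 1).neg, isSymm_zero,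
        rfl, rfl⟩, ?_⟩
    ext (k | k) <;> simp [single_apply, Pi.single_apply, eq_comm]

/-- The normaliser of the nilradical preserves the flag: the rows of elements of the nilradical
supply enough standard vectors to compare `N g` with `g (g⁻¹ N g)` column by column. -/
lemma blockTriangular_of_forall_conj_mem {g : Matrix (l ⊕ l) (l ⊕ l) R} (hg : IsUnit g.det)
    (hconj : ∀ X ∈ borelNilradical l R, g⁻¹ * X * g ∈ borelNilradical l R) :
    g.BlockTriangular flagRank := by
  suffices h : ∀ (r : l ⊕ₗ lᵒᵈ) i j, flagRank j = r → r < flagRank i → g i j = 0 from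
    fun i j hji => h _ i j rfl hji
  intro r
  induction r using WellFoundedLT.induction with
  | ind r ih =>
    rintro i j rfl hji
    obtain ⟨N, hN, hNj⟩ := exists_mem_borelNilradical_row_eq_single hji (R := R)
    have hN' := (mem_borelNilradical.1 (hconj N hN)).2
    calc g i j = (N * g) j j := by rw [mul_apply, hNj]; simp [Pi.single_apply]
      _ = (g * (g⁻¹ * N * g)) j j := by rw [mul_assoc g⁻¹, mul_nonsing_inv_cancel_left _ _ hg]
      _ = 0 := by
        rw [mul_apply]
        refine Finset.sum_eq_zero fun k _ => ?_
        obtain hjk | hkj := le_or_gt (flagRank j) (flagRank k)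
        · rw [hN' hjk, mul_zero]
        · rw [ih _ hkj j k rfl hkj, zero_mul]

lemma conj_mem_borelNilradical_of_mem_normalizer (h2 : IsUnit (2 : R)) {g : symplecticGroup l R}
    (hg : g ∈ Subgroup.normalizer (borelUnipotent l R : Set (symplecticGroup l R)))
    {X : Matrix (l ⊕ l) (l ⊕ l) R} (hX : X ∈ borelNilradical l R) :
    g.1⁻¹ * X * g.1 ∈ borelNilradical l R := by
  have hdet : IsUnit g.1.det := SymplecticGroup.symplectic_det g.2
  have hmem := (Subgroup.mem_normalizer_iff''.1 hg _).1 (cayley_mem_borelUnipotent h2 hX)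
  have hcayley := cayley_mem_borelNilradical h2 hmem
  rwa [Submonoid.coe_mul, Submonoid.coe_mul, SymplecticGroup.coe_inv', ← cayley_conj hdet,
    cayley_cayley h2] at hcayley
  rw [one_add_conj hdet, det_conj' ((isUnit_iff_isUnit_det _).2 hdet)]
  exact isUnit_det_one_add_of_mem_borelNilradical hX

lemma mem_borelUnipotent_of_mem_normalizer [IsReduced R] (h2 : IsUnit (2 : R)) {p : ℕ}
    [Fact p.Prime] [CharP R p] {g : symplecticGroup l R}
    (hg : g ∈ Subgroup.normalizer (borelUnipotent l R : Set (symplecticGroup l R))) {k : ℕ}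
    (hk : g ^ p ^ k = 1) : g ∈ borelUnipotent l R :=
  isStrictlyUpper_sub_one_of_pow_eq_one flagRank_injective
    (blockTriangular_of_forall_conj_mem (SymplecticGroup.symplectic_det g.2) fun _ hX =>
      conj_mem_borelNilradical_of_mem_normalizer h2 hg hX)
    (k := k) (by simpa using congrArg Subtype.val hk)

lemma nonempty_mulEquiv_borelUnipotent {F : Type*} [Field F] [Finite F] (h2 : (2 : F) ≠ 0) {p : ℕ}
    [Fact p.Prime] [CharP F p] (P : Sylow p (symplecticGroup l F)) :
    Nonempty (P ≃* borelUnipotent l F) := by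
  have := Fintype.ofFinite F
  obtain ⟨n, -, hn⟩ := FiniteField.card F p
  have hU : IsPGroup p (borelUnipotent l F) := .of_card (n := n * Fintype.card l ^ 2) (by
    rw [card_borelUnipotent h2.isUnit, Nat.card_eq_fintype_card, hn, pow_mul])
  obtain ⟨Q, hQ⟩ := hU.exists_le_sylow
  have hQ' : (Q : Subgroup (symplecticGroup l F)) = borelUnipotent l F :=
    coe_sylow_eq_of_mem_normalizer (fun g hg ⟨k, hk⟩ =>
      mem_borelUnipotent_of_mem_normalizer h2.isUnit hg hk) Q hQ
  exact ⟨(Sylow.equiv P Q).trans (MulEquiv.subgroupCongr hQ')⟩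

end BorelUnipotent

section ClassNumber

variable {F : Type*} [Field F] [Fintype F]

lemma card_conjClasses_borelUnipotent (h2 : (2 : F) ≠ 0) :
    (Nat.card (ConjClasses (borelUnipotent (Fin 5) F)) : ℤ) =
      eval (countPoint (Fintype.card F)) classPoly := by
  have hcard : (Fintype.card F : ℤ) ^ 25 ≠ 0 := pow_ne_zero _ (by simp)
  refine mul_right_cancel₀ hcard ?_
  calc (Nat.card (ConjClasses (borelUnipotent (Fin 5) F)) : ℤ) * (Fintype.card F : ℤ) ^ 25
      = (Nat.card {a : borelUnipotent (Fin 5) F × borelUnipotent (Fin 5) F //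
          Commute a.1 a.2} : ℤ) := by
        rw [card_comm_eq_card_conjClasses_mul_card, card_borelUnipotent h2.isUnit]
        simp
    _ = eval (countPoint (Fintype.card F)) classPoly * (Fintype.card F : ℤ) ^ 25 := by
        rw [card_commute_borelUnipotent h2.isUnit, card_lie_eq_zero_eq_card_dualSystem_eq_zero h2,
          card_dualSystem_eq_zero, mul_comm]

lemma eval_countPoint_classPoly {q v : ℕ} (hq : q = v + 1) :
    eval (countPoint q) classPoly =
      2 * v ^ 8 + 24 * v ^ 7 + 132 * v ^ 6 + 395 * v ^ 5 + 630 * v ^ 4 + 500 * v ^ 3 +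
        180 * v ^ 2 + 25 * v + 1 := by
  have htwo : evalMonomial (countPoint q) 2 = v := by
    simp [evalMonomial_prime _ Nat.prime_two, countPoint, hq]
  simp only [classPoly, eval_cons, eval_nil, map_pow, map_one, htwo]
  push_cast
  ring

end ClassNumber

end SymplecticUnipotent

/-- The number of conjugacy classes of a Sylow `p`-subgroup of `Sp_10(F_q)`,
for `p` an odd prime and `q` a power of `p`, written in `v = q - 1`. -/
theorem card_conjClasses_sylow_sp10 (p q : ℕ) (hp : p.Prime) (hodd : Odd p)
    (hq : ∃ n : ℕ, 0 < n ∧ q = p ^ n)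
    (F : Type*) [Field F] [Fintype F] (hF : Fintype.card F = q)
    (P : Sylow p (Matrix.symplecticGroup (Fin 5) F)) (v : ℕ) (hv : v = q - 1) :
    Nat.card (ConjClasses (P : Subgroup (Matrix.symplecticGroup (Fin 5) F))) =
      2 * v ^ 8 + 24 * v ^ 7 + 132 * v ^ 6 + 395 * v ^ 5 + 630 * v ^ 4 + 500 * v ^ 3 + 180 * v ^ 2 + 25 * v + 1 := by
  obtain ⟨n, -, hqn⟩ := hq
  have : Fact p.Prime := ⟨hp⟩
  have : CharP F p := charP_of_card_eq_prime_pow (hF.trans hqn)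
  have h2 : (2 : F) ≠ 0 := Ring.two_ne_zero (by
    rw [ringChar.eq F p]
    rintro rfl
    exact absurd hodd (by decide))
  have hqv : Fintype.card F = v + 1 := by
    have := Fintype.card_pos (α := F)
    omega
  obtain ⟨e⟩ := SymplecticUnipotent.nonempty_mulEquiv_borelUnipotent h2 P
  have hcount := SymplecticUnipotent.card_conjClasses_borelUnipotent h2
  rw [← SymplecticUnipotent.card_conjClasses_congr e,
    SymplecticUnipotent.eval_countPoint_classPoly hqv] at hcount
  exact_mod_cast hcount
end

section
/- Let Φ be an irreducible reduced crystallographic root system of rank r ≥ 3 in a finite-dimensional real vector space, with a fixed base Δ, corresponding set of positive roots Φ⁺, and height function ht (the sum of the coefficients of a positive root when written in the base Δ). Let α, β, γ ∈ Φ⁺ be pairwise distinct, linearly dependent roots with ht γ ≥ max(ht α, ht β). Then at least one of the following holds: (i) β − α ∈ Φ; (ii) γ − β ∈ Φ and γ − α ∈ Φ; (iii) γ − α ∈ Φ and β + γ − α ∉ Φ; (iv) γ − β ∈ Φ and α + γ − β ∉ Φ. -/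
open RealInnerProductSpace

/-!
An irreducible root system of rank at least `3` is not `G₂`, so its Cartan numbers are at most `2`,
that is `⟪β, α⟫ ≤ ⟪α, α⟫`; applied to the pair `α`, `α + β` this says that two roots whose sum is a
root are never at an acute angle. In the other direction, two distinct roots at an acute angle
differ by a root.

So assume `⟪α, β⟫ ≤ 0`, since otherwise `β - α` is a root. Vectors of an open half-space whose
pairwise angles are not acute are linearly independent, so `γ` is at an acute angle to `α` or `β`,
say to `α`, and `δ = γ - α` is a root; it is positive because `γ` is at least as high as `α`. Were
`β + δ` a root as well, no two of `α`, `β`, `δ` would be at an acute angle, so these three roots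
would be independent, and then so would `α`, `β`, `γ = α + δ`.
-/

section RootTriples

variable {V : Type*} [NormedAddCommGroup V] [InnerProductSpace ℝ V] {Φ : Set V}

theorem linearIndependent_triple_of_inner_nonpos (f : V →ₗ[ℝ] ℝ) {x y z : V}
    (hx : 0 < f x) (hy : 0 < f y) (hz : 0 < f z)
    (hxy : ⟪x, y⟫ ≤ 0) (hxz : ⟪x, z⟫ ≤ 0) (hyz : ⟪y, z⟫ ≤ 0) :
    LinearIndependent ℝ ![x, y, z] := by
  refine LinearMap.BilinForm.linearIndependent_of_pairwise_le_zero (innerₗ V) ?_ f _ ?_ ?_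
  · intro v hv
    simpa [sq_pos_iff] using hv
  · simp [Fin.forall_fin_succ, hx, hy, hz]
  · intro i j hij
    fin_cases i <;> fin_cases j <;> simp_all [real_inner_comm]

variable (hcrys : ∀ α ∈ Φ, ∀ β ∈ Φ, ∃ m : ℤ, 2 * ⟪β, α⟫ / ⟪α, α⟫ = (m : ℝ))
  (hrefl : ∀ α ∈ Φ, ∀ β ∈ Φ, β - (2 * ⟪β, α⟫ / ⟪α, α⟫) • α ∈ Φ)
  (hle : ∀ α ∈ Φ, ∀ β ∈ Φ, ⟪β, α⟫ ≤ ⟪α, α⟫)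

include hle in
theorem inner_nonpos_of_add_mem {α β : V} (hα : α ∈ Φ) (hadd : α + β ∈ Φ) : ⟪α, β⟫ ≤ 0 := by
  have := hle α hα (α + β) hadd
  rwa [inner_add_left, add_le_iff_nonpos_right, real_inner_comm] at this

include hle in
theorem linearIndependent_triple_of_add_mem (f : V →ₗ[ℝ] ℝ) {α β δ : V}
    (hα : α ∈ Φ) (hβ : β ∈ Φ) (hfα : 0 < f α) (hfβ : 0 < f β) (hfδ : 0 < f δ)
    (hαβ : ⟪α, β⟫ ≤ 0) (hαδ : α + δ ∈ Φ) (hβδ : β + δ ∈ Φ) :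
    LinearIndependent ℝ ![α, β, α + δ] := by
  have hli := linearIndependent_triple_of_inner_nonpos f hfα hfβ hfδ hαβ
    (inner_nonpos_of_add_mem hle hα hαδ) (inner_nonpos_of_add_mem hle hβ hβδ)
  rw [← linearIndependent_add_smul_iff (c := ![0, 0, 1]) (i := 0) rfl] at hli
  have hv : ![α, β, α + δ] = ![α, β, δ] + (![(0 : ℝ), 0, 1] · • ![α, β, δ] 0 : Fin 3 → V) := by
    ext i
    fin_cases i <;> simp [add_comm]
  exact hv ▸ hli

include hrefl in
theorem neg_mem_of_reflection_mem {α : V} (hα : α ∈ Φ) : -α ∈ Φ := by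
  rcases eq_or_ne α 0 with rfl | h0
  · simpa using hα
  · have h := hrefl α hα α hα
    rwa [mul_div_assoc, div_self (inner_self_ne_zero.mpr h0), mul_one, two_smul,
      sub_add_cancel_left] at h

include hcrys hle in
theorem cartan_eq_one_or_inner_eq_inner_self {α β : V} (hα : α ∈ Φ) (hβ : β ∈ Φ)
    (hpos : 0 < ⟪β, α⟫) :
    2 * ⟪β, α⟫ / ⟪α, α⟫ = 1 ∨ ⟪β, α⟫ = ⟪α, α⟫ := by
  have hαα : 0 < ⟪α, α⟫ := hpos.trans_le (hle α hα β hβ)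
  obtain ⟨m, hm⟩ := hcrys α hα β hβ
  have hm_pos : (0 : ℝ) < m := hm ▸ by positivity
  have hm_le : (m : ℝ) ≤ 2 := by
    rw [← hm, div_le_iff₀ hαα]
    linarith [hle α hα β hβ]
  norm_cast at hm_pos hm_le
  rw [hm]
  interval_cases m
  · simp
  · right
    field_simp at hm
    push_cast at hm
    linarith

include hcrys hrefl hle

theorem sub_mem_of_inner_pos {α β : V} (hα : α ∈ Φ) (hβ : β ∈ Φ) (hne : α ≠ β)
    (hpos : 0 < ⟪α, β⟫) : β - α ∈ Φ := by
  have hpos' : 0 < ⟪β, α⟫ := by rwa [real_inner_comm]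
  rcases cartan_eq_one_or_inner_eq_inner_self hcrys hle hα hβ hpos' with h | hβα
  · simpa only [h, one_smul] using hrefl α hα β hβ
  rcases cartan_eq_one_or_inner_eq_inner_self hcrys hle hβ hα hpos with h | hαβ
  · simpa only [h, one_smul, neg_sub] using
      neg_mem_of_reflection_mem hrefl (hrefl β hβ α hα)
  · refine absurd (sub_eq_zero.mp (inner_self_eq_zero.mp (?_ : ⟪α - β, α - β⟫ = 0))) hne
    rw [real_inner_sub_sub_self, ← hβα, ← hαβ, real_inner_comm]
    ring

theorem sub_mem_and_add_sub_notMem (f : V →ₗ[ℝ] ℝ) (hf : ∀ x ∈ Φ, f x ≠ 0) {α β γ : V}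
    (hα : α ∈ Φ) (hβ : β ∈ Φ) (hγ : γ ∈ Φ) (hαγ : α ≠ γ)
    (hdep : ¬ LinearIndependent ℝ ![α, β, γ])
    (hfα : 0 < f α) (hfβ : 0 < f β) (hfγ : f α ≤ f γ)
    (hαβ_inner : ⟪α, β⟫ ≤ 0) (hαγ_inner : 0 < ⟪α, γ⟫) :
    γ - α ∈ Φ ∧ β + γ - α ∉ Φ := by
  have hδ : γ - α ∈ Φ := sub_mem_of_inner_pos hcrys hrefl hle hα hγ hαγ hαγ_inner
  have hfδ : 0 < f (γ - α) := by
    refine lt_of_le_of_ne ?_ (hf _ hδ).symm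
    simpa using hfγ
  refine ⟨hδ, fun hβδ ↦ hdep ?_⟩
  rw [add_sub_assoc] at hβδ
  have hαδ : α + (γ - α) ∈ Φ := by rwa [add_sub_cancel]
  simpa only [add_sub_cancel] using
    linearIndependent_triple_of_add_mem hle f hα hβ hfα hfβ hfδ hαβ_inner hαδ hβδ

theorem sub_mem_or_of_not_linearIndependent
    (f : V →ₗ[ℝ] ℝ) (hf : ∀ x ∈ Φ, f x ≠ 0) {α β γ : V}
    (hα : α ∈ Φ) (hβ : β ∈ Φ) (hγ : γ ∈ Φ)
    (hαβ : α ≠ β) (hαγ : α ≠ γ) (hβγ : β ≠ γ)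
    (hdep : ¬ LinearIndependent ℝ ![α, β, γ])
    (hfα : 0 < f α) (hfβ : 0 < f β) (hfγ : max (f α) (f β) ≤ f γ) :
    β - α ∈ Φ ∨ (γ - α ∈ Φ ∧ β + γ - α ∉ Φ) ∨ (γ - β ∈ Φ ∧ α + γ - β ∉ Φ) := by
  obtain ⟨hfαγ, hfβγ⟩ := max_le_iff.mp hfγ
  rcases lt_or_ge 0 ⟪α, β⟫ with hαβ_inner | hαβ_inner
  · exact .inl (sub_mem_of_inner_pos hcrys hrefl hle hα hβ hαβ hαβ_inner)
  rcases lt_or_ge 0 ⟪α, γ⟫ with hαγ_inner | hαγ_inner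
  · exact .inr (.inl (sub_mem_and_add_sub_notMem hcrys hrefl hle f hf hα hβ hγ hαγ hdep
      hfα hfβ hfαγ hαβ_inner hαγ_inner))
  rcases lt_or_ge 0 ⟪β, γ⟫ with hβγ_inner | hβγ_inner
  · have hdep' : ¬ LinearIndependent ℝ ![β, α, γ] := by
      have hswap : ![β, α, γ] = ![α, β, γ] ∘ Equiv.swap 0 1 := by
        ext i
        fin_cases i <;> rfl
      rwa [hswap, linearIndependent_equiv]
    exact .inr (.inr (sub_mem_and_add_sub_notMem hcrys hrefl hle f hf hβ hα hγ hβγ hdep'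
      hfβ hfα hfβγ (by rwa [real_inner_comm]) hβγ_inner))
  · exact absurd (linearIndependent_triple_of_inner_nonpos f hfα hfβ (hfα.trans_le hfαγ)
      hαβ_inner hαγ_inner hβγ_inner) hdep

end RootTriples

section InnerRootPairing

theorem finrank_eq_two_of_isG2 {ι K M N : Type*} [Finite ι] [Field K] [CharZero K]
    [AddCommGroup M] [Module K M] [AddCommGroup N] [Module K N]
    (P : RootPairing ι K M N) [P.IsG2] : Module.finrank K M = 2 := by
  have := RootPairing.IsG2.toEmbeddedG2 P
  simpa using Module.finrank_eq_card_basis (RootPairing.EmbeddedG2.basis P)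

theorem isIrreducible_of_forall_pairing_eq_zero {ι K M N : Type*} [Field K] [NeZero (2 : K)]
    [AddCommGroup M] [Module K M] [AddCommGroup N] [Module K N] [Nontrivial M]
    (P : RootPairing ι K M N) [P.IsRootSystem]
    (h : ∀ s : Set ι, (∀ i ∈ s, ∀ j ∉ s, P.pairing i j = 0) → s = ∅ ∨ s = Set.univ) :
    P.IsIrreducible := by
  refine .mk' P fun q hq hq_bot ↦ ?_
  let q' : P.invtRootSubmodule := ⟨q, P.mem_invtRootSubmodule_iff.mpr hq⟩
  have horth : ∀ i ∈ {i | P.root i ∈ q}, ∀ j ∉ {i | P.root i ∈ q}, P.pairing i j = 0 :=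
    fun i hi j hj ↦ RootPairing.invtRootSubmodule.le_ker_coroot' q' hj hi
  rcases h _ horth with hempty | huniv
  · have hq'_bot : q' = ⊥ :=
      (RootPairing.invtRootSubmodule.eq_bot_iff q').mpr
        (Set.eq_empty_iff_forall_notMem.mp hempty)
    exact absurd (congrArg Subtype.val hq'_bot) hq_bot
  · have hq'_top : q' = ⊤ :=
      (RootPairing.invtRootSubmodule.eq_top_iff q').mpr
        (Set.range_subset_iff.mpr (Set.eq_univ_iff_forall.mp huniv))
    exact congrArg Subtype.val hq'_top

theorem pairing_le_two_of_isNotG2 {ι R M N : Type*} [CommRing R] [LinearOrder R]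
    [IsStrictOrderedRing R] [AddCommGroup M] [Module R M] [AddCommGroup N] [Module R N]
    (P : RootPairing ι R M N) [h : P.IsNotG2] (i j : ι) : P.pairing i j ≤ 2 := by
  have h2 : P.pairingIn ℤ i j ≤ 2 := by
    have := h.pairingIn_mem_zero_one_two i j
    grind
  rw [← P.algebraMap_pairingIn ℤ, eq_intCast]
  exact_mod_cast h2

variable {V : Type*} [NormedAddCommGroup V] [InnerProductSpace ℝ V]

theorem involutive_coroot : Function.Involutive fun x : V ↦ (2 / ⟪x, x⟫) • x := fun x ↦ by
  rcases eq_or_ne x 0 with rfl | hx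
  · simp
  have := inner_self_ne_zero (𝕜 := ℝ).mpr hx
  simp only [real_inner_smul_left, real_inner_smul_right, smul_smul]
  convert one_smul ℝ x using 2
  field_simp

variable [FiniteDimensional ℝ V]

instance isPerfPair_innerₗ : (innerₗ V).IsPerfPair := by
  have h : Function.Injective (innerₗ V) :=
    fun x y hxy ↦ ext_inner_right ℝ (LinearMap.congr_fun hxy)
  exact .of_injective h (by rwa [flip_innerₗ])

/-- The root pairing of a finite spanning set `Φ` of nonzero vectors closed under its reflections,
indexed by `Φ` itself, which gives access to the classification results about `RootPairing`. The
inner product identifies `V` with its dual, so the coroot of `α` is the vector `2α / ⟪α, α⟫`. -/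
noncomputable def innerRootPairing (Φ : Set V) [Finite Φ] (h0 : (0 : V) ∉ Φ)
    (hspan : Submodule.span ℝ Φ = ⊤)
    (hrefl : ∀ α ∈ Φ, ∀ β ∈ Φ, β - (2 * ⟪β, α⟫ / ⟪α, α⟫) • α ∈ Φ) : RootPairing Φ ℝ V V :=
  .mk'' (innerₗ V) (.subtype _)
    ((Function.Embedding.subtype _).trans involutive_coroot.toPerm.toEmbedding)
    (by
      rintro ⟨α, hα⟩
      have := inner_self_ne_zero (𝕜 := ℝ).mpr (ne_of_mem_of_not_mem hα h0)
      change ⟪α, (2 / ⟪α, α⟫) • α⟫ = 2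
      rw [real_inner_smul_right, div_mul_cancel₀ _ this])
    (by
      rintro ⟨α, hα⟩ _ ⟨⟨β, hβ⟩, rfl⟩
      refine ⟨⟨_, hrefl α hα β hβ⟩, ?_⟩
      simp [Module.preReflection_apply, real_inner_comm, div_mul_eq_mul_div])
    (by simpa using hspan)

variable {Φ : Set V} [Finite Φ] (h0 : (0 : V) ∉ Φ) (hspan : Submodule.span ℝ Φ = ⊤)
  (hrefl : ∀ α ∈ Φ, ∀ β ∈ Φ, β - (2 * ⟪β, α⟫ / ⟪α, α⟫) • α ∈ Φ)

theorem root_innerRootPairing (β : Φ) : (innerRootPairing Φ h0 hspan hrefl).root β = β := rfl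

theorem pairing_innerRootPairing (β α : Φ) :
    (innerRootPairing Φ h0 hspan hrefl).pairing β α = 2 * ⟪(β : V), α⟫ / ⟪(α : V), α⟫ := by
  rw [mul_div_right_comm, ← real_inner_smul_right]
  rfl

include h0 hspan hrefl in
theorem inner_le_inner_self_of_isNotG2 [(innerRootPairing Φ h0 hspan hrefl).IsNotG2]
    {α β : V} (hα : α ∈ Φ) (hβ : β ∈ Φ) : ⟪β, α⟫ ≤ ⟪α, α⟫ := by
  have hαα : 0 < ⟪α, α⟫ := real_inner_self_pos.mpr (ne_of_mem_of_not_mem hα h0)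
  have h2 := pairing_le_two_of_isNotG2 (innerRootPairing Φ h0 hspan hrefl) ⟨β, hβ⟩ ⟨α, hα⟩
  rw [pairing_innerRootPairing, div_le_iff₀ hαα] at h2
  linarith

variable (hcrys : ∀ α ∈ Φ, ∀ β ∈ Φ, ∃ m : ℤ, 2 * ⟪β, α⟫ / ⟪α, α⟫ = (m : ℝ))

include hcrys in
theorem isCrystallographic_innerRootPairing :
    (innerRootPairing Φ h0 hspan hrefl).IsCrystallographic where
  exists_value β α := by
    obtain ⟨m, hm⟩ := hcrys α α.2 β β.2
    exact ⟨m, by rw [pairing_innerRootPairing, hm]; simp⟩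

include hcrys in
theorem isRootSystem_innerRootPairing :
    (innerRootPairing Φ h0 hspan hrefl).IsRootSystem :=
  RootPairing.isRootSystem_mk'' fun β α ↦
    (isCrystallographic_innerRootPairing h0 hspan hrefl hcrys).exists_value β α

theorem isReduced_innerRootPairing (hred : ∀ α ∈ Φ, ∀ c : ℝ, c • α ∈ Φ → c = 1 ∨ c = -1) :
    (innerRootPairing Φ h0 hspan hrefl).IsReduced where
  eq_or_eq_neg α β hdep := by
    simp only [root_innerRootPairing] at hdep
    rw [LinearIndependent.pair_iff' (ne_of_mem_of_not_mem α.2 h0)] at hdep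
    push Not at hdep
    obtain ⟨c, hc⟩ := hdep
    rcases hred α α.2 c (hc ▸ β.2) with rfl | rfl
    · exact .inl <| by simpa [root_innerRootPairing] using hc
    · exact .inr <| by simp [root_innerRootPairing, ← hc]

include hcrys in
theorem isIrreducible_innerRootPairing [Nontrivial V]
    (hirr : ¬ ∃ Φ₁ Φ₂ : Set V, Φ₁.Nonempty ∧ Φ₂.Nonempty ∧ Φ₁ ∪ Φ₂ = Φ ∧
      Disjoint Φ₁ Φ₂ ∧ ∀ x ∈ Φ₁, ∀ y ∈ Φ₂, ⟪x, y⟫ = 0) :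
    (innerRootPairing Φ h0 hspan hrefl).IsIrreducible := by
  have := isRootSystem_innerRootPairing h0 hspan hrefl hcrys
  refine isIrreducible_of_forall_pairing_eq_zero _ fun s hs ↦ ?_
  by_contra! ⟨hs_ne, hs_ne_univ⟩
  refine hirr ⟨(↑) '' s, (↑) '' sᶜ, hs_ne.image _, (Set.nonempty_compl.mpr hs_ne_univ).image _,
    by rw [← Set.image_union, Set.union_compl_self, Set.image_univ, Subtype.range_coe],
    Set.disjoint_image_iff Subtype.val_injective |>.mpr disjoint_compl_right, ?_⟩
  rintro _ ⟨α, hα, rfl⟩ _ ⟨β, hβ, rfl⟩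
  simpa [pairing_innerRootPairing, ne_of_mem_of_not_mem β.2 h0] using hs α hα β hβ

end InnerRootPairing

theorem inner_le_inner_self_of_irreducible {V : Type*} [NormedAddCommGroup V]
    [InnerProductSpace ℝ V] [FiniteDimensional ℝ V]
    {Φ : Set V} (hfin : Φ.Finite) (h0 : (0 : V) ∉ Φ) (hspan : Submodule.span ℝ Φ = ⊤)
    (hcrys : ∀ α ∈ Φ, ∀ β ∈ Φ, ∃ m : ℤ, 2 * ⟪β, α⟫ / ⟪α, α⟫ = (m : ℝ))
    (hrefl : ∀ α ∈ Φ, ∀ β ∈ Φ, β - (2 * ⟪β, α⟫ / ⟪α, α⟫) • α ∈ Φ)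
    (hred : ∀ α ∈ Φ, ∀ c : ℝ, c • α ∈ Φ → c = 1 ∨ c = -1)
    (hirr : ¬ ∃ Φ₁ Φ₂ : Set V, Φ₁.Nonempty ∧ Φ₂.Nonempty ∧ Φ₁ ∪ Φ₂ = Φ ∧
      Disjoint Φ₁ Φ₂ ∧ ∀ x ∈ Φ₁, ∀ y ∈ Φ₂, ⟪x, y⟫ = 0)
    (hrank : Module.finrank ℝ V ≠ 2) {α β : V} (hα : α ∈ Φ) (hβ : β ∈ Φ) :
    ⟪β, α⟫ ≤ ⟪α, α⟫ := by
  have := hfin.to_subtype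
  have : Nontrivial V := ⟨α, 0, ne_of_mem_of_not_mem hα h0⟩
  have := isCrystallographic_innerRootPairing h0 hspan hrefl hcrys
  have := isReduced_innerRootPairing h0 hspan hrefl hred
  have := isIrreducible_innerRootPairing h0 hspan hrefl hcrys hirr
  have : (innerRootPairing Φ h0 hspan hrefl).IsNotG2 :=
    (innerRootPairing Φ h0 hspan hrefl).not_isG2_iff_isNotG2.mp
      fun _ ↦ hrank (finrank_eq_two_of_isG2 (innerRootPairing Φ h0 hspan hrefl))
  exact inner_le_inner_self_of_isNotG2 h0 hspan hrefl hα hβ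

section Height

theorem exists_linearMap_eq_one {K V : Type*} [Field K] [AddCommGroup V] [Module K V]
    {s : Set V} (hs : LinearIndependent K ((↑) : s → V)) :
    ∃ f : V →ₗ[K] K, ∀ x ∈ s, f x = 1 := by
  refine ⟨(Module.Basis.extend hs).constr K fun _ ↦ 1, fun x hx ↦ ?_⟩
  have h := (Module.Basis.extend hs).constr_basis K (fun _ ↦ (1 : K))
    ⟨x, Module.Basis.subset_extend hs hx⟩
  rwa [Module.Basis.extend_apply_self hs] at h

theorem map_finsum_smul_eq_finsum {R M : Type*} [Semiring R] [AddCommMonoid M] [Module R M]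
    {f : M →ₗ[R] R} {c : M → R} (hf : ∀ x, c x ≠ 0 → f x = 1) (hne : ∑ᶠ x, c x • x ≠ 0) :
    f (∑ᶠ x, c x • x) = ∑ᶠ x, c x := by
  rw [map_finsum f (hasFiniteSupport_of_finsum_ne_zero hne)]
  refine finsum_congr fun x ↦ ?_
  by_cases hx : c x = 0
  · simp [hx]
  · simp [hf x hx]

theorem map_finsum_smul_pos {R M : Type*} [Semiring R] [PartialOrder R]
    [IsOrderedCancelAddMonoid R] [AddCommMonoid M] [Module R M]
    {f : M →ₗ[R] R} {c : M → R} (hf : ∀ x, c x ≠ 0 → f x = 1)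
    (hc : ∀ x, 0 ≤ c x) (hne : ∑ᶠ x, c x • x ≠ 0) : 0 < f (∑ᶠ x, c x • x) := by
  obtain ⟨y, hy⟩ : ∃ y, c y ≠ 0 := by
    by_contra! h
    simp [h] at hne
  have hsupp : c.support ⊆ (fun x ↦ c x • x).support := fun x hx hx0 ↦ hx <| by
    simpa [hf x hx] using congrArg f hx0
  rw [map_finsum_smul_eq_finsum hf hne]
  exact finsum_pos hc ⟨y, (hc y).lt_of_ne' hy⟩
    ((hasFiniteSupport_of_finsum_ne_zero hne).subset hsupp)

theorem exists_heightFunctional {V : Type*} [AddCommGroup V] [Module ℝ V] {Φ Δ : Set V}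
    (h0 : (0 : V) ∉ Φ) (hΔli : LinearIndependent ℝ ((↑) : Δ → V)) {coeff : V → V → ℤ}
    (hcoeffsupp : ∀ β ∈ Φ, ∀ δ : V, coeff β δ ≠ 0 → δ ∈ Δ)
    (hcoeff : ∀ β ∈ Φ, β = ∑ᶠ δ : V, (coeff β δ : ℝ) • δ) :
    ∃ f : V →ₗ[ℝ] ℝ, (∀ β ∈ Φ, f β = (∑ᶠ δ, coeff β δ : ℤ)) ∧
      (∀ β ∈ Φ, (∀ δ, 0 ≤ coeff β δ) → 0 < f β) ∧ ∀ β ∈ Φ, (∀ δ, coeff β δ ≤ 0) → f β < 0 := by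
  obtain ⟨f, hf⟩ := exists_linearMap_eq_one hΔli
  have hf_supp : ∀ β ∈ Φ, ∀ δ, (coeff β δ : ℝ) ≠ 0 → f δ = 1 :=
    fun β hβ δ hδ ↦ hf δ (hcoeffsupp β hβ δ (by exact_mod_cast hδ))
  have hne : ∀ β ∈ Φ, ∑ᶠ δ, (coeff β δ : ℝ) • δ ≠ 0 :=
    fun β hβ ↦ hcoeff β hβ ▸ ne_of_mem_of_not_mem hβ h0
  refine ⟨f, fun β hβ ↦ ?_, fun β hβ hpos ↦ ?_, fun β hβ hneg ↦ ?_⟩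
  · conv_lhs => rw [hcoeff β hβ]
    rw [map_finsum_smul_eq_finsum (hf_supp β hβ) (hne β hβ)]
    exact ((Int.castAddHom ℝ).map_finsum_of_injective Int.cast_injective _).symm
  · rw [hcoeff β hβ]
    exact map_finsum_smul_pos (hf_supp β hβ) (by exact_mod_cast hpos) (hne β hβ)
  · have hneg_sum : -β = ∑ᶠ δ, (-(coeff β δ : ℝ)) • δ := by
      conv_lhs => rw [hcoeff β hβ, ← finsum_neg_distrib]
      simp only [neg_smul]
    rw [← neg_pos, ← map_neg, hneg_sum]
    refine map_finsum_smul_pos (fun δ hδ ↦ hf_supp β hβ δ (neg_ne_zero.mp hδ))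
      (fun δ ↦ neg_nonneg.mpr (by exact_mod_cast hneg δ)) ?_
    rw [← hneg_sum]
    exact neg_ne_zero.mpr (ne_of_mem_of_not_mem hβ h0)

end Height

theorem root_system_dependent_triple_general
    {V : Type*} [NormedAddCommGroup V] [InnerProductSpace ℝ V]
    (Φ : Set V) (h0 : (0 : V) ∉ Φ)
    (hcrys : ∀ α ∈ Φ, ∀ β ∈ Φ, ∃ m : ℤ, 2 * ⟪β, α⟫ / ⟪α, α⟫ = (m : ℝ))
    (hrefl : ∀ α ∈ Φ, ∀ β ∈ Φ, β - (2 * ⟪β, α⟫ / ⟪α, α⟫) • α ∈ Φ)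
    (hle : ∀ α ∈ Φ, ∀ β ∈ Φ, ⟪β, α⟫ ≤ ⟪α, α⟫)
    (Δ : Set V) (hΔli : LinearIndependent ℝ ((↑) : Δ → V)) (coeff : V → V → ℤ)
    (hcoeffsupp : ∀ β ∈ Φ, ∀ δ : V, coeff β δ ≠ 0 → δ ∈ Δ)
    (hcoeff : ∀ β ∈ Φ, β = ∑ᶠ δ : V, (coeff β δ : ℝ) • δ)
    (hsign : ∀ β ∈ Φ, (∀ δ : V, 0 ≤ coeff β δ) ∨ (∀ δ : V, coeff β δ ≤ 0))
    (Pos : Set V) (hPos : Pos = {β ∈ Φ | ∀ δ : V, 0 ≤ coeff β δ})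
    (ht : V → ℤ) (hht : ∀ β ∈ Φ, ht β = ∑ᶠ δ : V, coeff β δ)
    (α β γ : V) (hα : α ∈ Pos) (hβ : β ∈ Pos) (hγ : γ ∈ Pos)
    (hαβ : α ≠ β) (hαγ : α ≠ γ) (hβγ : β ≠ γ)
    (hdep : ¬ LinearIndependent ℝ ![α, β, γ])
    (hhtγ : max (ht α) (ht β) ≤ ht γ) :
    β - α ∈ Φ ∨ (γ - α ∈ Φ ∧ β + γ - α ∉ Φ) ∨ (γ - β ∈ Φ ∧ α + γ - β ∉ Φ) := by
  subst hPos
  obtain ⟨f, hf_ht, hf_pos, hf_neg⟩ := exists_heightFunctional h0 hΔli hcoeffsupp hcoeff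
  have hf_ne : ∀ x ∈ Φ, f x ≠ 0 := fun x hx ↦
    (hsign x hx).elim (fun h ↦ (hf_pos x hx h).ne') fun h ↦ (hf_neg x hx h).ne
  have hfγ : max (f α) (f β) ≤ f γ := by
    rw [hf_ht α hα.1, hf_ht β hβ.1, hf_ht γ hγ.1, ← hht α hα.1, ← hht β hβ.1, ← hht γ hγ.1]
    exact_mod_cast hhtγ
  exact sub_mem_or_of_not_linearIndependent hcrys hrefl hle f hf_ne hα.1 hβ.1 hγ.1
    hαβ hαγ hβγ hdep (hf_pos α hα.1 hα.2) (hf_pos β hβ.1 hβ.2) hfγ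

/-- Lemma 5.1 of the paper.  Let `Φ` be an irreducible reduced crystallographic root
system of rank `≥ 3` in a finite-dimensional real inner product space `V`, with base `Δ`,
set of positive roots `Pos`, and height function `ht`.  If `α`, `β`, `γ` are pairwise
distinct linearly dependent positive roots with `ht γ ≥ max (ht α) (ht β)`, then
`β - α ∈ Φ`, or (`γ - β ∈ Φ` and `γ - α ∈ Φ`), or (`γ - α ∈ Φ` but `β + γ - α ∉ Φ`),
or (`γ - β ∈ Φ` but `α + γ - β ∉ Φ`). -/
theorem root_system_dependent_triple
    {V : Type*} [NormedAddCommGroup V] [InnerProductSpace ℝ V] [FiniteDimensional ℝ V]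
    (Φ : Set V) (hfin : Φ.Finite) (h0 : (0 : V) ∉ Φ)
    (hspan : Submodule.span ℝ Φ = ⊤)
    -- the Cartan integers `⟨β, α∨⟩ = 2⟪β, α⟫/⟪α, α⟫` are integers (crystallographic)
    (hcrys : ∀ α ∈ Φ, ∀ β ∈ Φ, ∃ m : ℤ, 2 * ⟪β, α⟫ / ⟪α, α⟫ = (m : ℝ))
    -- `Φ` is closed under the reflections associated to its elements
    (hrefl : ∀ α ∈ Φ, ∀ β ∈ Φ, β - (2 * ⟪β, α⟫ / ⟪α, α⟫) • α ∈ Φ)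
    -- `Φ` is reduced: the only multiples of a root `α` in `Φ` are `±α`
    (hred : ∀ α ∈ Φ, ∀ c : ℝ, c • α ∈ Φ → c = 1 ∨ c = -1)
    -- `Φ` is irreducible: no partition into two nonempty mutually orthogonal subsets
    (hirr : ¬ ∃ Φ₁ Φ₂ : Set V, Φ₁.Nonempty ∧ Φ₂.Nonempty ∧ Φ₁ ∪ Φ₂ = Φ ∧
      Disjoint Φ₁ Φ₂ ∧ ∀ x ∈ Φ₁, ∀ y ∈ Φ₂, ⟪x, y⟫ = 0)
    -- the rank of `Φ` is at least 3
    (hrank : 3 ≤ Module.finrank ℝ V)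
    -- `Δ` is a base of `Φ`: a linearly independent subset such that every root is an
    -- integer combination of `Δ` with coefficients all `≥ 0` or all `≤ 0`;
    -- `coeff β δ` is the coefficient of `δ ∈ Δ` in the expression of the root `β`
    (Δ : Set V) (hΔΦ : Δ ⊆ Φ) (hΔli : LinearIndependent ℝ ((↑) : Δ → V))
    (coeff : V → V → ℤ)
    (hcoeffsupp : ∀ β ∈ Φ, ∀ δ : V, coeff β δ ≠ 0 → δ ∈ Δ)
    (hcoeff : ∀ β ∈ Φ, β = ∑ᶠ δ : V, (coeff β δ : ℝ) • δ)
    (hsign : ∀ β ∈ Φ, (∀ δ : V, 0 ≤ coeff β δ) ∨ (∀ δ : V, coeff β δ ≤ 0))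
    -- `Pos` is the set of positive roots and `ht` the height function
    (Pos : Set V) (hPos : Pos = {β ∈ Φ | ∀ δ : V, 0 ≤ coeff β δ})
    (ht : V → ℤ) (hht : ∀ β ∈ Φ, ht β = ∑ᶠ δ : V, coeff β δ)
    -- `α`, `β`, `γ` are pairwise distinct linearly dependent positive roots,
    -- with `γ` of maximal height among them
    (α β γ : V) (hα : α ∈ Pos) (hβ : β ∈ Pos) (hγ : γ ∈ Pos)
    (hαβ : α ≠ β) (hαγ : α ≠ γ) (hβγ : β ≠ γ)
    (hdep : ¬ LinearIndependent ℝ ![α, β, γ])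
    (hhtγ : max (ht α) (ht β) ≤ ht γ) :
    β - α ∈ Φ ∨ (γ - β ∈ Φ ∧ γ - α ∈ Φ) ∨ (γ - α ∈ Φ ∧ β + γ - α ∉ Φ) ∨
      (γ - β ∈ Φ ∧ α + γ - β ∉ Φ) := by
  have hle : ∀ α ∈ Φ, ∀ β ∈ Φ, ⟪β, α⟫ ≤ ⟪α, α⟫ := fun α hα β hβ ↦
    inner_le_inner_self_of_irreducible hfin h0 hspan hcrys hrefl hred hirr (by omega) hα hβ
  exact (root_system_dependent_triple_general Φ h0 hcrys hrefl hle Δ hΔli coeff hcoeffsupp hcoeff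
    hsign Pos hPos ht hht α β γ hα hβ hγ hαβ hαγ hβγ hdep hhtγ).imp_right .inr
end

section
/- Let q be a prime power and set v = q − 1. Let r, k be natural numbers with k ≤ r, let M be an r × k integer matrix whose columns are linearly independent over ℚ, and let d_1, …, d_k be the diagonal entries of a Smith normal form of M (so there exist invertible integer matrices P ∈ GL_r(ℤ) and Q ∈ GL_k(ℤ) such that P·M·Q has (l, l)-entry d_l for 1 ≤ l ≤ k and all other entries zero). Then the number of tuples b = (b_1, …, b_r) ∈ ((F_q)ˣ)^r satisfying ∏_{l=1}^{r} b_l^{M(l, j)} = 1 for all 1 ≤ j ≤ k equals v^{r − k} · ∏_{l=1}^{k} gcd(d_l, v). -/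
/-!
Raising to the powers prescribed by an integer matrix turns matrix multiplication into
composition, so the unimodular factors `P` and `Q` act by automorphisms and the kernels attached
to `M` and to its Smith normal form have the same cardinality.  The kernel of the diagonal form is
a product: one `d j`-torsion subgroup for each diagonal entry, and a full copy of the group for
each zero row.
-/

theorem zpow_finset_sum {ι G : Type*} [CommGroup G] (a : G) (f : ι → ℤ) (s : Finset ι) :
    a ^ ∑ i ∈ s, f i = ∏ i ∈ s, a ^ f i :=
  map_sum (zpowersHom G a).toAdditiveRight f s

theorem card_zpowGroupHom_ker (G : Type*) [CommGroup G] [IsCyclic G] [Finite G] (d : ℤ) :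
    Nat.card (zpowGroupHom d : G →* G).ker = Int.gcd d (Nat.card G) := by
  have ker_eq : (zpowGroupHom d : G →* G).ker = (powMonoidHom d.natAbs).ker := by
    ext x
    exact pow_natAbs_eq_one.symm
  rw [ker_eq, IsCyclic.card_powMonoidHom_ker, Nat.gcd_comm, Int.gcd_eq_natAbs, Int.natAbs_natCast]

section MonomialHom

variable {l m n : Type*} [Fintype m] (A : Type*) [CommGroup A]

/-- The monomial homomorphism `A ^ m → A ^ n` whose `j`-th coordinate is the Laurent monomial with
exponents the `j`-th column of `M`.  In additive notation this is `b ↦ b ᵥ* M`, so it reverses the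
order of matrix products. -/
def monomialHom (M : Matrix m n ℤ) : (m → A) →* (n → A) where
  toFun b j := ∏ i, b i ^ M i j
  map_one' := by
    ext j
    simp
  map_mul' b c := by
    ext j
    simp [mul_zpow, Finset.prod_mul_distrib]

variable {A}

theorem monomialHom_apply (M : Matrix m n ℤ) (b : m → A) (j : n) :
    monomialHom A M b j = ∏ i, b i ^ M i j :=
  rfl

theorem mem_ker_monomialHom {M : Matrix m n ℤ} {b : m → A} :
    b ∈ (monomialHom A M).ker ↔ ∀ j, ∏ i, b i ^ M i j = 1 :=
  funext_iff

variable (A)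

theorem monomialHom_one [DecidableEq m] :
    monomialHom A (1 : Matrix m m ℤ) = MonoidHom.id (m → A) := by
  ext b j
  simp [monomialHom_apply, Matrix.one_apply, pow_ite]

theorem monomialHom_mul [Fintype l] (M : Matrix l m ℤ) (N : Matrix m n ℤ) :
    monomialHom A (M * N) = (monomialHom A N).comp (monomialHom A M) := by
  ext b j
  calc ∏ i, b i ^ (M * N) i j
      = ∏ i, ∏ k, (b i ^ M i k) ^ N k j := by
        simp only [Matrix.mul_apply, zpow_finset_sum, zpow_mul]
    _ = ∏ k, ∏ i, (b i ^ M i k) ^ N k j := Finset.prod_comm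
    _ = ∏ k, (∏ i, b i ^ M i k) ^ N k j := by simp only [Finset.prod_zpow]

theorem monomialHom_bijective [DecidableEq m] {P : Matrix m m ℤ} (hP : IsUnit P) :
    Function.Bijective (monomialHom A P) := by
  obtain ⟨u, rfl⟩ := hP
  refine Function.bijective_iff_has_inverse.2 ⟨monomialHom A (↑u⁻¹ : Matrix m m ℤ), ?_, ?_⟩
  · intro b
    rw [← MonoidHom.comp_apply, ← monomialHom_mul, u.mul_inv, monomialHom_one, MonoidHom.id_apply]
  · intro b
    rw [← MonoidHom.comp_apply, ← monomialHom_mul, u.inv_mul, monomialHom_one, MonoidHom.id_apply]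

theorem card_ker_monomialHom_mul_mul [DecidableEq m] [Fintype n] [DecidableEq n]
    {P : Matrix m m ℤ} {Q : Matrix n n ℤ} (hP : IsUnit P) (hQ : IsUnit Q) (M : Matrix m n ℤ) :
    Nat.card (monomialHom A (P * M * Q)).ker = Nat.card (monomialHom A M).ker := by
  have P_bij := monomialHom_bijective A hP
  have ker_eq : (monomialHom A (P * M * Q)).ker =
      (monomialHom A M).ker.comap (monomialHom A P) := by
    rw [monomialHom_mul, MonoidHom.ker_comp_of_injective _ _ (monomialHom_bijective A hQ).injective,
      monomialHom_mul, MonoidHom.comap_ker]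
  rw [ker_eq]
  exact Nat.card_preimage_of_injective (s := ((monomialHom A M).ker : Set (m → A)))
    P_bij.injective fun b _ => P_bij.surjective b

end MonomialHom

section RectDiagonal

variable {m n : Type*} [Fintype m] [DecidableEq m] (A : Type*) [CommGroup A]

/-- The rectangular diagonal matrix with entries `d`, the shape of a Smith normal form.  The map
`e` specifies the row that carries the diagonal entry of each column. -/
def rectDiagonal (e : n → m) (d : n → ℤ) : Matrix m n ℤ :=
  Matrix.of fun i j => if i = e j then d j else 0

variable {A} in
theorem mem_ker_monomialHom_rectDiagonal {e : n → m} {d : n → ℤ} {b : m → A} :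
    b ∈ (monomialHom A (rectDiagonal e d)).ker ↔ ∀ j, b (e j) ^ d j = 1 := by
  simp only [mem_ker_monomialHom, rectDiagonal, Matrix.of_apply, pow_ite, zpow_zero,
    Finset.prod_ite_eq', Finset.mem_univ, if_true]

theorem card_ker_monomialHom_rectDiagonal [Fintype n] (e : n ↪ m) (d : n → ℤ) :
    Nat.card (monomialHom A (rectDiagonal e d)).ker =
      Nat.card A ^ (Fintype.card m - Fintype.card n) *
        ∏ j, Nat.card (zpowGroupHom (d j) : A →* A).ker := by
  let T (i : m) : Set A := {x | ∀ j, i = e j → x ^ d j = 1}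
  have mem_ker_iff (b : m → A) :
      b ∈ (monomialHom A (rectDiagonal e d)).ker ↔ ∀ i, b i ∈ T i := by
    rw [mem_ker_monomialHom_rectDiagonal]
    exact ⟨fun h i j hij => hij ▸ h j, fun h j => h (e j) j rfl⟩
  have T_diagonal (j : n) : T (e j) = (zpowGroupHom (d j) : A →* A).ker := by
    ext x
    simp [T, e.injective.eq_iff, MonoidHom.mem_ker]
  have T_zero_row (i : m) (hi : i ∈ (Finset.univ.map e)ᶜ) : T i = Set.univ := by
    refine Set.eq_univ_of_forall fun x j hij => absurd hi ?_
    simp [hij]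
  calc Nat.card (monomialHom A (rectDiagonal e d)).ker
      = Nat.card (∀ i, T i) :=
        Nat.card_congr ((Equiv.subtypeEquivRight mem_ker_iff).trans Equiv.subtypePiEquivPi)
    _ = (∏ i ∈ (Finset.univ.map e)ᶜ, Nat.card (T i)) * ∏ i ∈ Finset.univ.map e, Nat.card (T i) := by
        rw [Nat.card_pi, Finset.prod_compl_mul_prod]
    _ = (∏ _i ∈ (Finset.univ.map e)ᶜ, Nat.card A) * ∏ j, Nat.card (T (e j)) := by
        rw [Finset.prod_map]
        congr 1
        exact Finset.prod_congr rfl fun i hi => by rw [T_zero_row i hi, Nat.card_univ]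
    _ = Nat.card A ^ (Fintype.card m - Fintype.card n) *
          ∏ j, Nat.card (zpowGroupHom (d j) : A →* A).ker := by
        rw [Finset.prod_const, Finset.card_compl, Finset.card_map, Finset.card_univ]
        simp only [T_diagonal, SetLike.coe_sort_coe]

end RectDiagonal

theorem card_torus_kernel_eq_smith_general {m n A : Type*} [Fintype m] [DecidableEq m]
    [Fintype n] [DecidableEq n] [CommGroup A] [IsCyclic A] [Finite A]
    (M : Matrix m n ℤ) (e : n ↪ m) (d : n → ℤ) (P : Matrix m m ℤ) (Q : Matrix n n ℤ)
    (hP : IsUnit P) (hQ : IsUnit Q) (hSNF : P * M * Q = rectDiagonal e d) :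
    Nat.card {b : m → A // ∀ j, ∏ i, b i ^ M i j = 1} =
      Nat.card A ^ (Fintype.card m - Fintype.card n) * ∏ j, Int.gcd (d j) (Nat.card A) := by
  calc Nat.card {b : m → A // ∀ j, ∏ i, b i ^ M i j = 1}
      = Nat.card (monomialHom A M).ker :=
        Nat.card_congr (Equiv.subtypeEquivRight fun _ => mem_ker_monomialHom.symm)
    _ = Nat.card (monomialHom A (rectDiagonal e d)).ker := by
        rw [← hSNF, card_ker_monomialHom_mul_mul A hP hQ]
    _ = Nat.card A ^ (Fintype.card m - Fintype.card n) * ∏ j, Int.gcd (d j) (Nat.card A) := by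
        simp only [card_ker_monomialHom_rectDiagonal, card_zpowGroupHom_ker]

/-- Let `q` be a prime power, `v = q - 1`, and `M` an `r × k` integer matrix with
`ℚ`-linearly independent columns, with Smith normal form diagonal entries `d 1, …, d k`
(witnessed by `P ∈ GL_r(ℤ)`, `Q ∈ GL_k(ℤ)`).  Then the number of tuples
`b ∈ ((F_q)ˣ)^r` with `∏ l, b l ^ M l j = 1` for all `j` is
`v ^ (r - k) * ∏ l, gcd (d l) v`. -/
theorem card_torus_kernel_eq_smith (q : ℕ)
    (hq : ∃ p n : ℕ, p.Prime ∧ 0 < n ∧ q = p ^ n)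
    (F : Type*) [Field F] [Fintype F] (hF : Fintype.card F = q)
    (r k : ℕ) (hk : k ≤ r) (M : Matrix (Fin r) (Fin k) ℤ)
    (hM : LinearIndependent ℚ (fun j : Fin k => fun l : Fin r => (M l j : ℚ)))
    (d : Fin k → ℤ) (P : Matrix (Fin r) (Fin r) ℤ) (Q : Matrix (Fin k) (Fin k) ℤ)
    (hP : IsUnit P.det) (hQ : IsUnit Q.det)
    (hSNF : ∀ (l : Fin r) (j : Fin k),
      (P * M * Q) l j = if (l : ℕ) = (j : ℕ) then d j else 0) :
    Nat.card {b : Fin r → Fˣ // ∀ j : Fin k, (∏ l : Fin r, b l ^ M l j) = 1} =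
      (q - 1) ^ (r - k) * ∏ l : Fin k, Int.gcd (d l) (q - 1) := by
  obtain rfl : q = Nat.card Fˣ + 1 := by
    rw [← hF, ← Nat.card_eq_fintype_card, Nat.card_eq_card_units_add_one]
  simpa using card_torus_kernel_eq_smith_general (A := Fˣ) M (Fin.castLEEmb hk) d P Q
    (P.isUnit_iff_isUnit_det.2 hP) (Q.isUnit_iff_isUnit_det.2 hQ)
    (Matrix.ext fun l j => by simp [hSNF, rectDiagonal, Fin.ext_iff])
end
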